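/- Let 1 < p < ∞ and let E ⊆ ℝⁿ be a closed set. Suppose there exist x ∈ E, r_a > 0, c_fat > 0 and r_0 > 0 such that E is locally uniformly p-fat at E ∩ B̄(x, r_a) with parameters c_fat and r_0, i.e. for every z ∈ E ∩ B̄(x, r_a) and every 0 < r < r_0 one has cap_p({w ∈ B̄(0,1/2) : z + r w ∈ E}; B(0,1)) ≥ c_fat. Then there exist ε = ε(n,p,c_fat) with 0 < ε < p − 1 and a constant c̃_fat = c̃_fat(n,p,c_fat) > 0 such that E is locally uniformly (p−ε)-fat at E ∩ B̄(x, r̃_0) with parameters c̃_fat and r̃_0, where r̃_0 = (1/4)·min{r_a, r_0}. -/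

import Mathlib

open MeasureTheory Metric Set

noncomputable section

/-- Euclidean space `ℝⁿ`. -/
abbrev En (n : ℕ) : Type := EuclideanSpace ℝ (Fin n)

/-- Norm of the (a.e. defined, by Rademacher's theorem) gradient of `u` at `x`. -/
def gnorm {n : ℕ} (u : En n → ℝ) (x : En n) : ℝ := ‖fderiv ℝ u x‖

/-- Admissible test functions for the level-`t` capacity of `E` in `O`:
Lipschitz on the closure of `O`, `u ≥ t` on `E`, `u = 0` on `∂O`. -/
def Adm {n : ℕ} (E O : Set (En n)) (t : ℝ) : Set (En n → ℝ) :=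
  {u | (∃ K, LipschitzOnWith K u (closure O)) ∧ (∀ x ∈ E, t ≤ u x) ∧
    ∀ x ∈ frontier O, u x = 0}

/-- Level-`t` variational capacity with integrand `ψ` and normalization `ψm`. -/
def capLevel {n : ℕ} (ψ : En n → ℝ → ℝ) (ψm : ℝ → ℝ)
    (E O : Set (En n)) (t : ℝ) : ℝ :=
  sInf ((fun u => ∫ x in O, ψ x (gnorm u x) / ψm t) '' Adm E O t)

/-- Infimal capacity with integrand `ψ` and normalization `ψm`. -/
def capInfGen {n : ℕ} (ψ : En n → ℝ → ℝ) (ψm : ℝ → ℝ) (E O : Set (En n)) : ℝ :=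
  ⨅ t : Ioi (0 : ℝ), capLevel ψ ψm E O (t : ℝ)

/-- The double-phase integrand `φ(x,t) = t^p + a(x) t^q`. -/
def phi {n : ℕ} (a : En n → ℝ) (p q : ℝ) (x : En n) (t : ℝ) : ℝ :=
  t ^ p + a x * t ^ q

/-- `a_O^- = inf_{x ∈ O} a(x)`. -/
def aInfOn {n : ℕ} (a : En n → ℝ) (O : Set (En n)) : ℝ := sInf (a '' O)

/-- `a_O^+ = sup_{x ∈ O} a(x)`. -/
def aSupOn {n : ℕ} (a : En n → ℝ) (O : Set (En n)) : ℝ := sSup (a '' O)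

/-- `φ_O^-(t) = t^p + a_O^- t^q`. -/
def phiMinus {n : ℕ} (a : En n → ℝ) (p q : ℝ) (O : Set (En n)) (t : ℝ) : ℝ :=
  t ^ p + aInfOn a O * t ^ q

/-- Level-`t` variational capacity for the double-phase integrand. -/
def capPhiLevel {n : ℕ} (a : En n → ℝ) (p q t : ℝ) (E O : Set (En n)) : ℝ :=
  capLevel (phi a p q) (phiMinus a p q O) E O t

/-- Infimal `φ`-capacity. -/
def capPhiInf {n : ℕ} (a : En n → ℝ) (p q : ℝ) (E O : Set (En n)) : ℝ :=
  ⨅ t : Ioi (0 : ℝ), capPhiLevel a p q (t : ℝ) E O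

/-- Variational `p`-capacity. -/
def capP {n : ℕ} (p : ℝ) (E O : Set (En n)) : ℝ :=
  sInf ((fun u => ∫ x in O, gnorm u x ^ p) '' Adm E O 1)

/-- The rescaled set `{x ∈ B̄(0,1/2) : z + r x ∈ E}`. -/
def shiftedSet {n : ℕ} (E : Set (En n)) (z : En n) (r : ℝ) : Set (En n) :=
  {x ∈ closedBall (0 : En n) (1 / 2) | z + r • x ∈ E}

/-- Local uniform infimal `φ`-fatness with parameters `cfat` and `ro`. -/
def LocUnifPhiFat {n : ℕ} (a : En n → ℝ) (p q : ℝ) (E : Set (En n))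
    (cfat ro : ℝ) : Prop :=
  ∀ z ∈ E, ∀ r : ℝ, 0 < r → r < ro →
    cfat ≤ capPhiInf (fun x => a (z + r • x)) p q (shiftedSet E z r) (ball (0 : En n) 1)

/-- Local uniform `p`-fatness with parameters `cfat` and `ro`. -/
def LocUnifPFat {n : ℕ} (p : ℝ) (E : Set (En n)) (cfat ro : ℝ) : Prop :=
  ∀ z ∈ E, ∀ r : ℝ, 0 < r → r < ro →
    cfat ≤ capP p (shiftedSet E z r) (ball (0 : En n) 1)

/-- `Lip_0(Ω)`: Lipschitz functions with compact support contained in `Ω`,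
extended by zero to `ℝⁿ`. -/
def Lip0 {n : ℕ} (Ω : Set (En n)) : Set (En n → ℝ) :=
  {u | (∃ K, LipschitzWith K u) ∧ HasCompactSupport u ∧ tsupport u ⊆ Ω}

/-- Restricted centered maximal operator `M_R f(x) = sup_{0<r<R} ⨍_{B(x,r)} |f|`. -/
def maxOp {n : ℕ} (R : ℝ) (f : En n → ℝ) (x : En n) : ℝ :=
  ⨆ r : Ioo (0 : ℝ) R, ⨍ y in ball x (r : ℝ), |f y|

/-- Local uniform `p`-fatness of `E` at every point of a subset `S`. -/
def LocUnifPFatAt {n : ℕ} (p : ℝ) (E S : Set (En n)) (cfat r0 : ℝ) : Prop :=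
  ∀ z ∈ S, ∀ r : ℝ, 0 < r → r < r0 →
    cfat ≤ capP p (shiftedSet E z r) (ball (0 : En n) 1)

open scoped ENNReal NNReal Topology

lemma gnorm_nonneg {n : ℕ} (u : En n → ℝ) (x : En n) : 0 ≤ gnorm u x := norm_nonneg _

lemma measurable_gnorm {n : ℕ} (u : En n → ℝ) : Measurable (gnorm u) :=
  (measurable_fderiv ℝ u).norm

lemma measurable_ofReal_gnorm_rpow {n : ℕ} (u : En n → ℝ) (p : ℝ) :
    Measurable fun x => ENNReal.ofReal (gnorm u x ^ p) :=
  ((measurable_gnorm u).pow_const p).ennreal_ofReal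

lemma LocallyLipschitz.exists_lipschitzOnWith_of_isCompact {X Y : Type*} [PseudoMetricSpace X]
    [PseudoMetricSpace Y] {u : X → Y} (hu : LocallyLipschitz u) {s : Set X} (hs : IsCompact s) :
    ∃ K, LipschitzOnWith K u s :=
  hu.locallyLipschitzOn.exists_lipschitzOnWith_of_compact hs

lemma LocallyLipschitz.ae_differentiableAt {n : ℕ} {u : En n → ℝ} (hu : LocallyLipschitz u) :
    ∀ᵐ x, DifferentiableAt ℝ u x := by
  have h : ∀ k : ℕ, ∀ᵐ x : En n, x ∈ closedBall (0 : En n) k →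
      DifferentiableWithinAt ℝ u (closedBall 0 k) x := fun k => by
    obtain ⟨K, hK⟩ := hu.exists_lipschitzOnWith_of_isCompact (isCompact_closedBall (0 : En n) k)
    exact hK.ae_differentiableWithinAt_of_mem
  filter_upwards [ae_all_iff.2 h] with x hx
  obtain ⟨k, hk⟩ := exists_nat_gt ‖x‖
  have hxk : x ∈ ball (0 : En n) k := by simpa using hk
  exact (hx k (ball_subset_closedBall hxk)).differentiableAt
    (Filter.mem_of_superset (isOpen_ball.mem_nhds hxk) ball_subset_closedBall)

/-- The increment of `u` along a segment is controlled by the integral of the gradient, as soon as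
`u` is differentiable at almost every point of the segment. -/
lemma enorm_sub_le_lintegral_gnorm {n : ℕ} {u : En n → ℝ} (hu : LocallyLipschitz u) (x v : En n)
    (hd : ∀ᵐ t : ℝ, t ∈ Ioc (0 : ℝ) 1 → DifferentiableAt ℝ u (x + t • v)) :
    ENNReal.ofReal |u (x + v) - u x| ≤
      ∫⁻ t in Ioc (0 : ℝ) 1, ENNReal.ofReal (gnorm u (x + t • v) * ‖v‖) := by
  set f : ℝ → ℝ := fun t => u (x + t • v) with hf
  have hline : LocallyLipschitz fun t : ℝ => x + t • v :=
    ContDiff.locallyLipschitz (𝕂 := ℝ) (by fun_prop)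
  obtain ⟨K, hK⟩ := (hu.comp hline).exists_lipschitzOnWith_of_isCompact
    (isCompact_uIcc (a := (0 : ℝ)) (b := 1))
  have hftc : ∫ t in (0 : ℝ)..1, deriv f t = f 1 - f 0 :=
    (hK.absolutelyContinuousOnInterval).integral_deriv_eq_sub
  have h01 : f 1 - f 0 = u (x + v) - u x := by simp [hf]
  rw [← h01, ← hftc, ← Real.norm_eq_abs, ofReal_norm,
    intervalIntegral.integral_of_le zero_le_one]
  refine (enorm_integral_le_lintegral_enorm _).trans ?_
  refine lintegral_mono_ae ?_
  filter_upwards [(ae_restrict_iff' measurableSet_Ioc).2 hd] with t ht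
  have h1 : HasDerivAt (fun t : ℝ => x + t • v) v t := by
    simpa using ((hasDerivAt_id t).smul_const v).const_add x
  have h2 : deriv f t = fderiv ℝ u (x + t • v) v := (ht.hasFDerivAt.comp_hasDerivAt t h1).deriv
  rw [h2, ← ofReal_norm]
  exact ENNReal.ofReal_le_ofReal ((fderiv ℝ u (x + t • v)).le_opNorm v)

/-- Almost every translate of a given segment lies almost everywhere in the set of points of
differentiability. -/
lemma ae_ae_differentiableAt_translate {n : ℕ} {u : En n → ℝ} (hu : LocallyLipschitz u) (v : En n) :
    ∀ᵐ x : En n, ∀ᵐ t : ℝ, DifferentiableAt ℝ u (x + t • v) := by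
  have hmeas : MeasurableSet {z : En n × ℝ | DifferentiableAt ℝ u (z.1 + z.2 • v)} :=
    (measurableSet_of_differentiableAt ℝ u).preimage (by fun_prop)
  refine (Measure.ae_ae_comm hmeas).2 (Filter.Eventually.of_forall fun t => ?_)
  exact (measurePreserving_add_right volume (t • v)).quasiMeasurePreserving.ae hu.ae_differentiableAt

/-- Almost every segment starting at a given point lies almost everywhere in the set of points of
differentiability. -/
lemma ae_ae_differentiableAt_ray {n : ℕ} {u : En n → ℝ} (hu : LocallyLipschitz u) (x : En n) :
    ∀ᵐ v : En n, ∀ᵐ t : ℝ, t ∈ Ioc (0 : ℝ) 1 → DifferentiableAt ℝ u (x + t • v) := by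
  have hmeas : MeasurableSet {z : En n × ℝ | z.2 ∈ Ioc (0 : ℝ) 1 →
      DifferentiableAt ℝ u (x + z.2 • z.1)} := by
    have h1 : MeasurableSet {z : En n × ℝ | z.2 ∈ Ioc (0 : ℝ) 1} :=
      measurableSet_Ioc.preimage measurable_snd
    have h2 : MeasurableSet {z : En n × ℝ | DifferentiableAt ℝ u (x + z.2 • z.1)} :=
      (measurableSet_of_differentiableAt ℝ u).preimage (by fun_prop)
    exact h1.imp h2
  refine (Measure.ae_ae_comm hmeas).2 (Filter.Eventually.of_forall fun t => ?_)
  by_cases ht : t ∈ Ioc (0 : ℝ) 1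
  · have hq : Measure.QuasiMeasurePreserving (fun v : En n => x + t • v) volume volume :=
      (measurePreserving_add_left volume x).quasiMeasurePreserving.comp
        (Measure.quasiMeasurePreserving_smul (μ := volume) ht.1.ne')
    filter_upwards [hq.ae hu.ae_differentiableAt] with v hv _
    exact hv
  · exact Filter.Eventually.of_forall fun v h => absurd h ht

/-- Jensen's inequality for powers on the unit interval. -/
lemma rpow_lintegral_Ioc_le {p : ℝ} (hp : 1 < p) {f : ℝ → ℝ≥0∞} (hf : Measurable f) :
    (∫⁻ t in Ioc (0 : ℝ) 1, f t) ^ p ≤ ∫⁻ t in Ioc (0 : ℝ) 1, f t ^ p := by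
  have h := ENNReal.lintegral_mul_le_Lp_mul_Lq (volume.restrict (Ioc (0 : ℝ) 1))
    (Real.HolderConjugate.conjExponent hp) hf.aemeasurable (g := fun _ => 1) aemeasurable_const
  simp only [Pi.mul_apply, mul_one, ENNReal.one_rpow, lintegral_const, Measure.restrict_apply,
    MeasurableSet.univ, univ_inter, Real.volume_Ioc, sub_zero, ENNReal.ofReal_one] at h
  calc _ ≤ ((∫⁻ t in Ioc (0 : ℝ) 1, f t ^ p) ^ (1 / p)) ^ p := by gcongr
    _ = _ := by rw [← ENNReal.rpow_mul, one_div_mul_cancel (by positivity), ENNReal.rpow_one]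

lemma setLIntegral_comp_add_right_le {n : ℕ} {s t : Set (En n)} (hs : MeasurableSet s)
    (ht : MeasurableSet t) (f : En n → ℝ≥0∞) (v : En n) (hst : ∀ x ∈ s, x + v ∈ t) :
    ∫⁻ x in s, f (x + v) ≤ ∫⁻ x in t, f x := by
  rw [← lintegral_indicator hs, ← lintegral_indicator ht,
    ← lintegral_add_right_eq_self (t.indicator f) v]
  refine lintegral_mono fun x => ?_
  by_cases hx : x ∈ s
  · simp [indicator_of_mem hx, indicator_of_mem (hst x hx)]
  · simp [indicator_of_notMem hx]

lemma lintegral_ball_translate_le {n : ℕ} {u : En n → ℝ} (hu : LocallyLipschitz u) {p : ℝ}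
    (hp : 1 < p) (v : En n) (hv : ‖v‖ ≤ 2) :
    ∫⁻ x in ball (0 : En n) 1, ENNReal.ofReal (|u (x + v) - u x| ^ p) ≤
      ENNReal.ofReal (2 ^ p) * ∫⁻ x in ball (0 : En n) 3, ENNReal.ofReal (gnorm u x ^ p) := by
  have hp0 : 0 ≤ p := by linarith
  have hm := measurable_ofReal_gnorm_rpow u p
  have hpt : ∀ᵐ x : En n, ENNReal.ofReal (|u (x + v) - u x| ^ p) ≤
      ∫⁻ t in Ioc (0 : ℝ) 1, ENNReal.ofReal (2 ^ p) * ENNReal.ofReal (gnorm u (x + t • v) ^ p) := by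
    filter_upwards [ae_ae_differentiableAt_translate hu v] with x hx
    have h1 := enorm_sub_le_lintegral_gnorm hu x v (hx.mono fun t ht _ => ht)
    rw [← ENNReal.ofReal_rpow_of_nonneg (abs_nonneg _) hp0]
    refine (ENNReal.rpow_le_rpow h1 hp0).trans ?_
    refine (rpow_lintegral_Ioc_le hp ?_).trans (lintegral_mono fun t => ?_)
    · exact (((measurable_gnorm u).comp (by fun_prop)).mul_const _).ennreal_ofReal
    · have hg := gnorm_nonneg u (x + t • v)
      rw [ENNReal.ofReal_rpow_of_nonneg (by positivity) hp0, ← ENNReal.ofReal_mul (by positivity),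
        mul_comm, Real.mul_rpow (norm_nonneg _) hg]
      gcongr
  refine (lintegral_mono_ae (ae_restrict_of_ae hpt)).trans ?_
  rw [lintegral_lintegral_swap]
  · calc _ ≤ ∫⁻ t in Ioc (0 : ℝ) 1, ENNReal.ofReal (2 ^ p) *
          ∫⁻ x in ball (0 : En n) 3, ENNReal.ofReal (gnorm u x ^ p) := by
          refine setLIntegral_mono' measurableSet_Ioc fun t ht => ?_
          rw [lintegral_const_mul' _ _ ENNReal.ofReal_ne_top]
          refine mul_le_mul_right ?_ _
          refine setLIntegral_comp_add_right_le measurableSet_ball measurableSet_ball _ _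
            fun x hx => ?_
          have h1 : ‖t • v‖ ≤ 1 * 2 := by
            rw [norm_smul, Real.norm_eq_abs, abs_of_pos ht.1]
            gcongr
            exact ht.2
          have h2 := norm_add_le x (t • v)
          rw [mem_ball_zero_iff] at hx ⊢
          linarith
    _ = _ := by simp
  · refine Measurable.aemeasurable ?_
    refine Measurable.const_mul ?_ _
    exact hm.comp (by fun_prop)

lemma add_rpow_le_two_rpow_mul {a b p : ℝ} (ha : 0 ≤ a) (hb : 0 ≤ b) (hp : 0 ≤ p) :
    (a + b) ^ p ≤ 2 ^ p * (a ^ p + b ^ p) := by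
  have h1 : (a + b) ^ p ≤ (2 * max a b) ^ p := by
    gcongr
    linarith [le_max_left a b, le_max_right a b]
  rw [Real.mul_rpow zero_le_two (ha.trans (le_max_left a b))] at h1
  refine h1.trans ?_
  gcongr
  have ha' : 0 ≤ a ^ p := by positivity
  have hb' : 0 ≤ b ^ p := by positivity
  rcases max_choice a b with h | h <;> rw [h] <;> linarith

lemma ofReal_add_rpow_le {a b p : ℝ} (ha : 0 ≤ a) (hb : 0 ≤ b) (hp : 0 ≤ p) :
    ENNReal.ofReal ((a + b) ^ p) ≤
      ENNReal.ofReal (2 ^ p) * (ENNReal.ofReal (a ^ p) + ENNReal.ofReal (b ^ p)) := by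
  rw [← ENNReal.ofReal_add (by positivity) (by positivity), ← ENNReal.ofReal_mul (by positivity)]
  exact ENNReal.ofReal_le_ofReal (add_rpow_le_two_rpow_mul ha hb hp)

lemma gnorm_mul_le {n : ℕ} {u v : En n → ℝ} {x : En n} (hu : DifferentiableAt ℝ u x)
    (hv : DifferentiableAt ℝ v x) :
    gnorm (fun y => u y * v y) x ≤ |u x| * gnorm v x + |v x| * gnorm u x := by
  unfold gnorm
  rw [fderiv_fun_mul hu hv]
  refine (norm_add_le _ _).trans ?_
  simp [norm_smul]

lemma gnorm_le_of_lipschitzWith {n : ℕ} {u : En n → ℝ} {K : ℝ≥0} (hu : LipschitzWith K u)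
    (x : En n) : gnorm u x ≤ K :=
  norm_fderiv_le_of_lipschitz ℝ hu

lemma LocallyLipschitz.mul_real {X : Type*} [PseudoMetricSpace X] {u v : X → ℝ}
    (hu : LocallyLipschitz u) (hv : LocallyLipschitz v) :
    LocallyLipschitz fun x => u x * v x :=
  (ContDiff.locallyLipschitz (𝕂 := ℝ) (contDiff_mul (𝔸 := ℝ))).comp (hu.prodMk hv)

/-- The capacity is a lower bound for the energy of admissible functions. -/
lemma ofReal_le_lintegral_of_le_capP {n : ℕ} {p c : ℝ} {K : Set (En n)}
    (hc : c ≤ capP p K (ball 0 1)) {f : En n → ℝ} (hf : f ∈ Adm K (ball 0 1) 1) :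
    ENNReal.ofReal c ≤ ∫⁻ x in ball (0 : En n) 1, ENNReal.ofReal (gnorm f x ^ p) := by
  have h1 : capP p K (ball 0 1) ≤ ∫ x in ball (0 : En n) 1, gnorm f x ^ p := by
    refine csInf_le ⟨0, ?_⟩ ⟨f, hf, rfl⟩
    rintro _ ⟨v, -, rfl⟩
    exact integral_nonneg fun x => Real.rpow_nonneg (gnorm_nonneg v x) p
  refine (ENNReal.ofReal_le_ofReal (hc.trans h1)).trans ?_
  rw [integral_eq_lintegral_of_nonneg_ae
    (Filter.Eventually.of_forall fun x => Real.rpow_nonneg (gnorm_nonneg f x) p)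
    ((measurable_gnorm f).pow_const p).aestronglyMeasurable]
  exact ENNReal.ofReal_toReal_le

/-- A Poincaré inequality: the oscillation around a suitable value of the function. -/
lemma exists_poincare (n : ℕ) {p : ℝ} (hp : 1 < p) :
    ∃ C : ℝ, 0 < C ∧ ∀ u : En n → ℝ, LocallyLipschitz u → ∃ m : ℝ,
      ∫⁻ y in ball (0 : En n) 1, ENNReal.ofReal (|u y - m| ^ p) ≤
        ENNReal.ofReal C * ∫⁻ x in ball (0 : En n) 3, ENNReal.ofReal (gnorm u x ^ p) := by
  have hv1 : (volume (ball (0 : En n) 1)) ≠ 0 := (measure_ball_pos _ _ one_pos).ne'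
  have hv1' : (volume (ball (0 : En n) 1)) ≠ ∞ := measure_ball_lt_top.ne
  have hv2' : (volume (closedBall (0 : En n) 2)) ≠ ∞ := measure_closedBall_lt_top.ne
  set A := (volume (ball (0 : En n) 1))⁻¹ *
    (ENNReal.ofReal (2 ^ p) * volume (closedBall (0 : En n) 2)) with hA
  have hA' : A ≠ ∞ := by
    rw [hA]
    exact ENNReal.mul_ne_top (ENNReal.inv_ne_top.2 hv1) (ENNReal.mul_ne_top ENNReal.ofReal_ne_top hv2')
  have hA0 : A ≠ 0 := by
    have h2 : (volume (closedBall (0 : En n) 2)) ≠ 0 :=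
      (measure_closedBall_pos _ _ two_pos).ne'
    simp [hA, hv1', h2, Real.rpow_pos_of_pos]
  refine ⟨A.toReal, ENNReal.toReal_pos hA0 hA', fun u hu => ?_⟩
  rw [ENNReal.ofReal_toReal hA']
  have huc := hu.continuous
  have hmeas : Measurable fun z : En n × En n => ENNReal.ofReal (|u z.2 - u z.1| ^ p) := by
    fun_prop
  have hmeas' : Measurable fun z : En n × En n => ENNReal.ofReal (|u (z.1 + z.2) - u z.1| ^ p) := by
    fun_prop
  obtain ⟨x, -, hx⟩ := exists_le_setLAverage (μ := volume) (s := ball (0 : En n) 1)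
    (f := fun x => ∫⁻ y in ball (0 : En n) 1, ENNReal.ofReal (|u y - u x| ^ p)) hv1 hv1'
    (hmeas.lintegral_prod_right').aemeasurable
  refine ⟨u x, hx.trans ?_⟩
  rw [setLAverage_eq, ENNReal.div_eq_inv_mul, hA, mul_assoc]
  refine mul_le_mul_right ?_ _
  calc ∫⁻ x in ball (0 : En n) 1, ∫⁻ y in ball (0 : En n) 1, ENNReal.ofReal (|u y - u x| ^ p)
      ≤ ∫⁻ x in ball (0 : En n) 1, ∫⁻ v in closedBall (0 : En n) 2,
          ENNReal.ofReal (|u (x + v) - u x| ^ p) := by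
        refine setLIntegral_mono' measurableSet_ball fun x hx => ?_
        have := setLIntegral_comp_add_right_le measurableSet_ball measurableSet_closedBall
          (fun v => ENNReal.ofReal (|u (x + v) - u x| ^ p)) (-x) (s := ball (0 : En n) 1)
          (t := closedBall (0 : En n) 2) fun y hy => by
            rw [mem_ball_zero_iff] at hx hy
            rw [mem_closedBall_zero_iff]
            have := norm_add_le y (-x)
            rw [norm_neg] at this
            linarith
        simpa using this
    _ = ∫⁻ v in closedBall (0 : En n) 2, ∫⁻ x in ball (0 : En n) 1,
          ENNReal.ofReal (|u (x + v) - u x| ^ p) :=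
        lintegral_lintegral_swap hmeas'.aemeasurable
    _ ≤ ∫⁻ v in closedBall (0 : En n) 2, (ENNReal.ofReal (2 ^ p) *
          ∫⁻ x in ball (0 : En n) 3, ENNReal.ofReal (gnorm u x ^ p)) :=
        setLIntegral_mono' measurableSet_closedBall fun v hv =>
          lintegral_ball_translate_le hu hp v (by simpa using hv)
    _ = _ := by
        rw [setLIntegral_const]
        ring

lemma lipschitzWith_cutoff {n : ℕ} (a b : ℝ) (k : ℝ≥0) :
    LipschitzWith k fun x : En n => min a (b - k * ‖x‖) := by
  have h : LipschitzWith k fun x : En n => b - k * ‖x‖ := by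
    refine LipschitzWith.of_dist_le_mul fun x y => ?_
    rw [Real.dist_eq, dist_eq_norm]
    have h1 := abs_norm_sub_norm_le y x
    have h2 : b - k * ‖x‖ - (b - k * ‖y‖) = k * (‖y‖ - ‖x‖) := by ring
    rw [h2, abs_mul, NNReal.abs_eq, norm_sub_rev]
    gcongr
  exact h.const_min a

/-- Maz'ya's inequality on the unit ball, for functions vanishing on a set of large capacity. -/
lemma exists_mazya_unit (n : ℕ) {p c : ℝ} (hp : 1 < p) (hc : 0 < c) :
    ∃ C : ℝ, 0 < C ∧ ∀ K : Set (En n), K ⊆ closedBall 0 (1 / 2) → c ≤ capP p K (ball 0 1) →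
      ∀ u : En n → ℝ, LocallyLipschitz u → (∀ x ∈ K, u x = 0) →
      ∫⁻ y in ball (0 : En n) 1, ENNReal.ofReal (|u y| ^ p) ≤
        ENNReal.ofReal C * ∫⁻ x in ball (0 : En n) 3, ENNReal.ofReal (gnorm u x ^ p) := by
  obtain ⟨C, hC, hpoin⟩ := exists_poincare n hp
  have hp0 : 0 ≤ p := by linarith
  set B : ℝ := 2 ^ p * (1 + 2 ^ p * C) with hB
  have hB0 : 0 < B := by positivity
  set V : ℝ := (volume (ball (0 : En n) 1)).toReal with hV
  have hVeq : volume (ball (0 : En n) 1) = ENNReal.ofReal V :=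
    (ENNReal.ofReal_toReal measure_ball_lt_top.ne).symm
  have hV0 : 0 ≤ V := ENNReal.toReal_nonneg
  refine ⟨2 ^ p * (C + B / c * V), by positivity, fun K hK hcap u hu hu0 => ?_⟩
  obtain ⟨m, hm⟩ := hpoin u hu
  set I := ∫⁻ x in ball (0 : En n) 3, ENNReal.ofReal (gnorm u x ^ p) with hI
  have hI1 : ∫⁻ x in ball (0 : En n) 1, ENNReal.ofReal (gnorm u x ^ p) ≤ I :=
    lintegral_mono_set (ball_subset_ball (by norm_num))
  have huc := hu.continuous
  have key : ENNReal.ofReal (|m| ^ p) ≤ ENNReal.ofReal (B / c) * I := by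
    rcases eq_or_ne m 0 with rfl | hm0
    · simp [Real.zero_rpow (by linarith : p ≠ 0)]
    have hmp : 0 < |m| := abs_pos.2 hm0
    set ζ : En n → ℝ := fun x => min 1 (2 - (2 : ℝ≥0) * ‖x‖) with hζ
    have hζL : LipschitzWith 2 ζ := lipschitzWith_cutoff 1 2 2
    set f : En n → ℝ := fun x => (m⁻¹ * (m - u x)) * ζ x with hf
    have hmu : LocallyLipschitz fun x => m⁻¹ * (m - u x) :=
      (LocallyLipschitz.const m⁻¹).mul_real ((LocallyLipschitz.const m).sub hu)
    have hfL : LocallyLipschitz f := hmu.mul_real hζL.locallyLipschitz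
    have hadm : f ∈ Adm K (ball 0 1) 1 := by
      refine ⟨?_, fun x hx => ?_, fun x hx => ?_⟩
      · rw [closure_ball _ one_ne_zero]
        exact hfL.exists_lipschitzOnWith_of_isCompact (isCompact_closedBall _ _)
      · have h1 := hK hx
        rw [mem_closedBall_zero_iff] at h1
        have h2 : ζ x = 1 := by
          simp only [hζ, NNReal.coe_ofNat]
          exact min_eq_left (by linarith)
        simp [hf, hu0 x hx, h2, hm0]
      · rw [frontier_ball _ one_ne_zero, mem_sphere_zero_iff_norm] at hx
        have h2 : ζ x = 0 := by
          simp only [hζ, NNReal.coe_ofNat, hx]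
          norm_num
        simp [hf, h2]
    have hE := ofReal_le_lintegral_of_le_capP hcap hadm
    have hbound : ∀ᵐ x : En n, x ∈ ball (0 : En n) 1 → ENNReal.ofReal (gnorm f x ^ p) ≤
        ENNReal.ofReal ((|m| ^ p)⁻¹ * 2 ^ p) * (ENNReal.ofReal (gnorm u x ^ p) +
          ENNReal.ofReal (2 ^ p) * ENNReal.ofReal (|u x - m| ^ p)) := by
      filter_upwards [hu.ae_differentiableAt, hζL.locallyLipschitz.ae_differentiableAt] with x h1 h2 hx
      rw [mem_ball_zero_iff] at hx
      have h3 : gnorm (fun x => m⁻¹ * (m - u x)) x = |m|⁻¹ * gnorm u x := by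
        unfold gnorm
        rw [fderiv_const_mul (h1.const_sub m), fderiv_const_sub]
        simp [norm_smul]
      have hζ1 : |ζ x| ≤ 1 := by
        rw [abs_le]
        refine ⟨?_, min_le_left _ _⟩
        simp only [hζ, NNReal.coe_ofNat]
        refine le_min (by norm_num) (by linarith)
      have h4 : gnorm f x ≤ |m|⁻¹ * (gnorm u x + 2 * |u x - m|) := by
        refine (gnorm_mul_le ((h1.const_sub m).const_mul m⁻¹) h2).trans ?_
        rw [h3, abs_mul, abs_inv, abs_sub_comm]
        have hg := gnorm_nonneg u x
        have hgz : gnorm ζ x ≤ 2 := gnorm_le_of_lipschitzWith hζL x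
        calc _ ≤ |m|⁻¹ * |u x - m| * 2 + 1 * (|m|⁻¹ * gnorm u x) := by gcongr
          _ = _ := by ring
      rw [← ENNReal.ofReal_mul (by positivity),
        ← ENNReal.ofReal_add (Real.rpow_nonneg (gnorm_nonneg u x) p) (by positivity),
        ← ENNReal.ofReal_mul (by positivity)]
      refine ENNReal.ofReal_le_ofReal ?_
      have hg := gnorm_nonneg u x
      calc gnorm f x ^ p ≤ (|m|⁻¹ * (gnorm u x + 2 * |u x - m|)) ^ p :=
            Real.rpow_le_rpow (gnorm_nonneg f x) h4 hp0
        _ = (|m| ^ p)⁻¹ * (gnorm u x + 2 * |u x - m|) ^ p := by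
            rw [Real.mul_rpow (by positivity) (by positivity), Real.inv_rpow hmp.le]
        _ ≤ (|m| ^ p)⁻¹ * (2 ^ p * (gnorm u x ^ p + (2 * |u x - m|) ^ p)) := by
            gcongr
            exact add_rpow_le_two_rpow_mul hg (by positivity) hp0
        _ = _ := by
            rw [Real.mul_rpow (by norm_num) (abs_nonneg _)]
            ring
    have h5 : ENNReal.ofReal c ≤ ENNReal.ofReal ((|m| ^ p)⁻¹ * B) * I := by
      calc ENNReal.ofReal c ≤ _ := hE
        _ ≤ _ := lintegral_mono_ae ((ae_restrict_iff' measurableSet_ball).2 hbound)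
        _ = ENNReal.ofReal ((|m| ^ p)⁻¹ * 2 ^ p) *
            ((∫⁻ x in ball (0 : En n) 1, ENNReal.ofReal (gnorm u x ^ p)) + ENNReal.ofReal (2 ^ p) *
            ∫⁻ x in ball (0 : En n) 1, ENNReal.ofReal (|u x - m| ^ p)) := by
            rw [lintegral_const_mul' _ _ ENNReal.ofReal_ne_top,
              lintegral_add_left (measurable_ofReal_gnorm_rpow u p),
              lintegral_const_mul' _ _ ENNReal.ofReal_ne_top]
        _ ≤ ENNReal.ofReal ((|m| ^ p)⁻¹ * 2 ^ p) *
            (I + ENNReal.ofReal (2 ^ p) * (ENNReal.ofReal C * I)) := by gcongr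
        _ = ENNReal.ofReal ((|m| ^ p)⁻¹ * 2 ^ p) * (ENNReal.ofReal (1 + 2 ^ p * C) * I) := by
            rw [ENNReal.ofReal_add zero_le_one (by positivity), ENNReal.ofReal_one,
              ENNReal.ofReal_mul (p := 2 ^ p) (q := C) (by positivity)]
            ring
        _ = _ := by
            rw [← mul_assoc, ← ENNReal.ofReal_mul (by positivity), hB, mul_assoc]
    calc ENNReal.ofReal (|m| ^ p) = ENNReal.ofReal (|m| ^ p / c) * ENNReal.ofReal c := by
          rw [← ENNReal.ofReal_mul (by positivity), div_mul_cancel₀ _ hc.ne']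
      _ ≤ ENNReal.ofReal (|m| ^ p / c) * (ENNReal.ofReal ((|m| ^ p)⁻¹ * B) * I) := by gcongr
      _ = _ := by
          rw [← mul_assoc, ← ENNReal.ofReal_mul (by positivity)]
          congr 2
          have : |m| ^ p ≠ 0 := by positivity
          field_simp
  calc ∫⁻ y in ball (0 : En n) 1, ENNReal.ofReal (|u y| ^ p)
      ≤ ∫⁻ y in ball (0 : En n) 1, ENNReal.ofReal (2 ^ p) *
          (ENNReal.ofReal (|u y - m| ^ p) + ENNReal.ofReal (|m| ^ p)) := by
        refine lintegral_mono fun y => ?_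
        refine le_trans (ENNReal.ofReal_le_ofReal ?_)
          (ofReal_add_rpow_le (abs_nonneg (u y - m)) (abs_nonneg m) hp0)
        gcongr
        simpa using abs_add_le (u y - m) m
    _ = ENNReal.ofReal (2 ^ p) * ((∫⁻ y in ball (0 : En n) 1, ENNReal.ofReal (|u y - m| ^ p)) +
          ENNReal.ofReal (|m| ^ p) * ENNReal.ofReal V) := by
        rw [lintegral_const_mul' _ _ ENNReal.ofReal_ne_top, lintegral_add_right _ measurable_const,
          setLIntegral_const, hVeq]
    _ ≤ ENNReal.ofReal (2 ^ p) * (ENNReal.ofReal C * I +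
          ENNReal.ofReal (B / c) * I * ENNReal.ofReal V) := by gcongr
    _ = _ := by
        rw [ENNReal.ofReal_mul (by positivity), ENNReal.ofReal_add hC.le (by positivity),
          ENNReal.ofReal_mul (p := B / c) (by positivity)]
        ring

lemma lintegral_comp_smul_of_pos {n : ℕ} {r : ℝ} (hr : 0 < r) (f : En n → ℝ≥0∞) :
    ∫⁻ x, f (r • x) = ENNReal.ofReal ((r ^ n)⁻¹) * ∫⁻ y, f y := by
  have h := (Homeomorph.smulOfNeZero (α := En n) r hr.ne').measurableEmbedding.lintegral_map
    (μ := volume) f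
  have hm : Measure.map (Homeomorph.smulOfNeZero (α := En n) r hr.ne') volume =
      ENNReal.ofReal ((r ^ n)⁻¹) • (volume : Measure (En n)) := by
    have := Measure.map_addHaar_smul (volume : Measure (En n)) hr.ne'
    rw [finrank_euclideanSpace_fin, abs_of_pos (by positivity)] at this
    exact this
  rw [hm, lintegral_smul_measure] at h
  exact h.symm

lemma lintegral_comp_add_smul {n : ℕ} (z : En n) {r : ℝ} (hr : 0 < r) (f : En n → ℝ≥0∞) :
    ∫⁻ x, f (z + r • x) = ENNReal.ofReal ((r ^ n)⁻¹) * ∫⁻ y, f y := by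
  rw [lintegral_comp_smul_of_pos hr fun y => f (z + y), lintegral_add_left_eq_self f z]

lemma setLIntegral_ball_comp_add_smul {n : ℕ} (z : En n) {r : ℝ} (hr : 0 < r) (a : ℝ)
    (f : En n → ℝ≥0∞) :
    ∫⁻ x in ball (0 : En n) a, f (z + r • x) =
      ENNReal.ofReal ((r ^ n)⁻¹) * ∫⁻ y in ball z (r * a), f y := by
  rw [← lintegral_indicator measurableSet_ball, ← lintegral_indicator measurableSet_ball,
    ← lintegral_comp_add_smul z hr]
  refine lintegral_congr fun x => ?_
  have : x ∈ ball (0 : En n) a ↔ z + r • x ∈ ball z (r * a) := by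
    rw [mem_ball_zero_iff, mem_ball_iff_norm, add_sub_cancel_left, norm_smul, Real.norm_eq_abs,
      abs_of_pos hr, mul_lt_mul_iff_right₀ hr]
  by_cases hx : x ∈ ball (0 : En n) a
  · simp [indicator_of_mem hx, indicator_of_mem (this.1 hx)]
  · simp [indicator_of_notMem hx, indicator_of_notMem (mt this.2 hx)]

lemma gnorm_comp_add_smul {n : ℕ} (u : En n → ℝ) (z : En n) {r : ℝ} (hr : 0 < r) (x : En n) :
    gnorm (fun x => u (z + r • x)) x = r * gnorm u (z + r • x) := by
  unfold gnorm
  rw [fderiv_comp_smul (f := fun y => u (z + y)), fderiv_comp_add_left, norm_smul,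
    Real.norm_eq_abs, abs_of_pos hr]

/-- Maz'ya's inequality on a ball centred at a point of fatness. -/
lemma exists_mazya (n : ℕ) {p c : ℝ} (hp : 1 < p) (hc : 0 < c) :
    ∃ C : ℝ, 0 < C ∧ ∀ (F : Set (En n)) (z : En n) (r : ℝ), 0 < r →
      c ≤ capP p (shiftedSet F z r) (ball 0 1) →
      ∀ u : En n → ℝ, LocallyLipschitz u → (∀ x ∈ F, u x = 0) →
      ∫⁻ y in ball z r, ENNReal.ofReal (|u y| ^ p) ≤
        ENNReal.ofReal (C * r ^ p) * ∫⁻ x in ball z (3 * r), ENNReal.ofReal (gnorm u x ^ p) := by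
  obtain ⟨C, hC, hmaz⟩ := exists_mazya_unit n hp hc
  refine ⟨C, hC, fun F z r hr hcap u hu hu0 => ?_⟩
  have hline : LocallyLipschitz fun x : En n => z + r • x :=
    ContDiff.locallyLipschitz (𝕂 := ℝ) (by fun_prop)
  have h := hmaz _ (fun x hx => hx.1) hcap (fun x => u (z + r • x)) (hu.comp hline)
    fun x hx => hu0 _ hx.2
  have hg : ∀ x, ENNReal.ofReal (gnorm (fun x => u (z + r • x)) x ^ p) =
      ENNReal.ofReal (r ^ p) * ENNReal.ofReal (gnorm u (z + r • x) ^ p) := fun x => by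
    rw [gnorm_comp_add_smul u z hr, Real.mul_rpow hr.le (gnorm_nonneg u _),
      ENNReal.ofReal_mul (by positivity)]
  simp_rw [hg] at h
  rw [lintegral_const_mul' _ _ ENNReal.ofReal_ne_top,
    setLIntegral_ball_comp_add_smul z hr 1 fun y => ENNReal.ofReal (|u y| ^ p),
    setLIntegral_ball_comp_add_smul z hr 3 fun y => ENNReal.ofReal (gnorm u y ^ p), mul_one,
    mul_comm r 3] at h
  have hr0 : ENNReal.ofReal ((r ^ n)⁻¹) ≠ 0 := by
    simp only [ne_eq, ENNReal.ofReal_eq_zero, not_le]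
    positivity
  rw [← ENNReal.mul_le_mul_iff_right hr0 ENNReal.ofReal_ne_top,
    ENNReal.ofReal_mul hC.le]
  refine h.trans (le_of_eq ?_)
  ring

lemma lintegral_lintegral_ball {n : ℕ} {r : ℝ} (hr : 0 < r) {f : En n → ℝ≥0∞}
    (hf : Measurable f) :
    ∫⁻ a, ∫⁻ y in ball a r, f y =
      ENNReal.ofReal (r ^ n) * volume (ball (0 : En n) 1) * ∫⁻ y, f y := by
  have h1 : ∀ a y : En n, (ball a r).indicator f y = (ball y r).indicator (fun _ => f y) a := by
    intro a y
    by_cases h : y ∈ ball a r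
    · rw [indicator_of_mem h, indicator_of_mem (mem_ball_comm.1 h)]
    · rw [indicator_of_notMem h, indicator_of_notMem (mt mem_ball_comm.1 h)]
  simp_rw [← lintegral_indicator (measurableSet_ball (α := En n))]
  rw [lintegral_lintegral_swap]
  · simp_rw [h1, lintegral_indicator (measurableSet_ball (α := En n)), setLIntegral_const,
      Measure.addHaar_ball_of_pos volume _ hr, finrank_euclideanSpace_fin]
    rw [lintegral_mul_const _ hf, mul_comm]
  · have : Function.uncurry (fun a => (ball a r).indicator f) =
        {z : En n × En n | dist z.2 z.1 < r}.indicator fun z => f z.2 := by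
      rfl
    rw [this]
    refine ((hf.comp measurable_snd).indicator ?_).aemeasurable
    exact measurableSet_lt (by fun_prop) measurable_const

/-- Maz'ya's inequality in the `t`-neighbourhood of a fat set. -/
lemma exists_neighborhood_mazya (n : ℕ) {p c : ℝ} (hp : 1 < p) (hc : 0 < c) :
    ∃ C : ℝ, 0 < C ∧ ∀ (F : Set (En n)) (t N : ℝ), 0 < t → F.Nonempty →
      (∀ z ∈ F, ‖z‖ ≤ N + t → c ≤ capP p (shiftedSet F z (3 * t)) (ball 0 1)) →
      ∀ u : En n → ℝ, LocallyLipschitz u → (∀ x ∈ F, u x = 0) → (∀ x, N < ‖x‖ → u x = 0) →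
      ∫⁻ y in {y | infDist y F < t}, ENNReal.ofReal (|u y| ^ p) ≤
        ENNReal.ofReal (C * t ^ p) *
          ∫⁻ x in {x | infDist x F < 9 * t}, ENNReal.ofReal (gnorm u x ^ p) := by
  obtain ⟨C, hC, hmaz⟩ := exists_mazya n hp hc
  refine ⟨C * 3 ^ p * 11 ^ n, by positivity, fun F t N ht hF hfat u hu hu0 huN => ?_⟩
  have hset : ∀ s : ℝ, MeasurableSet {y : En n | infDist y F < s} := fun s =>
    measurableSet_lt (continuous_infDist_pt F).measurable measurable_const
  have huc := hu.continuous
  have hm1 : Measurable fun y => ENNReal.ofReal (|u y| ^ p) := by fun_prop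
  set f := {y : En n | infDist y F < t}.indicator fun y => ENNReal.ofReal (|u y| ^ p) with hf
  set h := {y : En n | infDist y F < 9 * t}.indicator fun y => ENNReal.ofReal (gnorm u y ^ p) with hh
  have hfm : Measurable f := hm1.indicator (hset t)
  have hhm : Measurable h := (measurable_ofReal_gnorm_rpow u p).indicator (hset _)
  have hp0 : p ≠ 0 := by linarith
  have hloc : ∀ a : En n, ∫⁻ y in ball a t, f y ≤
      ENNReal.ofReal (C * (3 * t) ^ p) * ∫⁻ y in ball a (11 * t), h y := by
    intro a
    by_cases hne : ∃ y ∈ ball a t, infDist y F < t ∧ u y ≠ 0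
    · obtain ⟨y, hya, hyF, huy⟩ := hne
      obtain ⟨z, hz, hyz⟩ := (infDist_lt_iff hF).1 hyF
      have hyN : ‖y‖ ≤ N := not_lt.1 fun hlt => huy (huN y hlt)
      have hzN : ‖z‖ ≤ N + t := by
        have h1 := norm_le_norm_add_norm_sub' z y
        rw [dist_eq_norm] at hyz
        rw [norm_sub_rev] at h1
        linarith
      have hmz := hmaz F z (3 * t) (by positivity) (hfat z hz hzN) u hu hu0
      rw [mem_ball] at hya
      have hb1 : ball a t ⊆ ball z (3 * t) := by
        refine ball_subset_ball' ?_
        linarith [dist_triangle_left a z y]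
      have hb2 : ball z (3 * (3 * t)) ⊆ ball a (11 * t) := by
        refine ball_subset_ball' ?_
        linarith [dist_triangle_left z a y]
      calc ∫⁻ y in ball a t, f y ≤ ∫⁻ y in ball z (3 * t), ENNReal.ofReal (|u y| ^ p) :=
            (lintegral_mono_set hb1).trans (lintegral_mono fun y => indicator_le_self _ _ _)
        _ ≤ _ := hmz
        _ ≤ _ := by
            refine mul_le_mul_right ?_ _
            refine le_trans ?_ (lintegral_mono_set hb2)
            refine setLIntegral_mono' measurableSet_ball fun x hx => ?_
            have : x ∈ {y : En n | infDist y F < 9 * t} := by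
              have h1 := infDist_le_dist_of_mem hz (x := x)
              rw [mem_ball] at hx
              simp only [mem_ofPred_eq]
              linarith
            rw [hh, indicator_of_mem this]
    · push Not at hne
      have : ∫⁻ y in ball a t, f y = 0 := by
        rw [setLIntegral_eq_zero_iff measurableSet_ball hfm]
        refine Filter.Eventually.of_forall fun y hy => ?_
        by_cases hyF : infDist y F < t
        · simp [hf, hne y hy hyF, hp0]
        · simp [hf, hyF]
      simp [this]
  have hlocInt := lintegral_mono (μ := (volume : Measure (En n))) hloc
  rw [lintegral_lintegral_ball ht hfm, lintegral_const_mul' _ _ ENNReal.ofReal_ne_top,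
    lintegral_lintegral_ball (by positivity) hhm, hf, hh, lintegral_indicator (hset _),
    lintegral_indicator (hset _)] at hlocInt
  have hv : ENNReal.ofReal (t ^ n) * volume (ball (0 : En n) 1) ≠ 0 := by
    refine mul_ne_zero ?_ (measure_ball_pos _ _ one_pos).ne'
    simp only [ne_eq, ENNReal.ofReal_eq_zero, not_le]
    positivity
  rw [← ENNReal.mul_le_mul_iff_right hv (ENNReal.mul_ne_top ENNReal.ofReal_ne_top
    measure_ball_lt_top.ne)]
  refine hlocInt.trans (le_of_eq ?_)
  have e1 : ENNReal.ofReal (C * (3 * t) ^ p) = ENNReal.ofReal (C * 3 ^ p * t ^ p) := by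
    rw [Real.mul_rpow (by norm_num) ht.le, mul_assoc]
  have e2 : C * 3 ^ p * 11 ^ n * t ^ p = C * 3 ^ p * t ^ p * 11 ^ n := by ring
  rw [e1, e2, mul_pow, ENNReal.ofReal_mul (p := 11 ^ n) (by positivity),
    ENNReal.ofReal_mul (p := C * 3 ^ p * t ^ p) (by positivity)]
  ring

lemma lintegral_mul_lintegral_Ioi {α : Type*} [MeasurableSpace α] {μ : Measure α} [SFinite μ]
    {f : α → ℝ≥0∞} {k : ℝ → ℝ≥0∞} {D : α → ℝ} (hf : Measurable f) (hk : Measurable k)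
    (hD : Measurable D) :
    ∫⁻ y, f y * (∫⁻ t in Ioi (D y), k t) ∂μ = ∫⁻ t, k t * ∫⁻ y in {y | D y < t}, f y ∂μ := by
  have hset : ∀ t, MeasurableSet {y | D y < t} := fun t => measurableSet_lt hD measurable_const
  have h1 : ∀ y, f y * ∫⁻ t in Ioi (D y), k t =
      ∫⁻ t, {z : α × ℝ | D z.1 < z.2}.indicator (fun z => f z.1 * k z.2) (y, t) := fun y => by
    rw [← lintegral_indicator measurableSet_Ioi, ← lintegral_const_mul _ (hk.indicator measurableSet_Ioi)]
    refine lintegral_congr fun t => ?_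
    by_cases h : D y < t <;> simp [indicator, h]
  have h2 : ∀ t, k t * ∫⁻ y in {y | D y < t}, f y ∂μ =
      ∫⁻ y, {z : α × ℝ | D z.1 < z.2}.indicator (fun z => f z.1 * k z.2) (y, t) ∂μ := fun t => by
    rw [← lintegral_indicator (hset t), ← lintegral_const_mul _ (hf.indicator (hset t))]
    refine lintegral_congr fun y => ?_
    by_cases h : D y < t <;> simp [indicator, h, mul_comm]
  simp_rw [h1, h2]
  refine lintegral_lintegral_swap (Measurable.aemeasurable ?_)
  refine Measurable.indicator (by fun_prop) (measurableSet_lt (by fun_prop) measurable_snd)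

lemma ofReal_rpow_neg_le_lintegral {D a : ℝ} (hD : 0 < D) (ha : 0 ≤ a) :
    ENNReal.ofReal (D ^ (-a)) ≤
      ENNReal.ofReal (2 ^ (a + 1)) * ∫⁻ t in Ioc D (2 * D), ENNReal.ofReal (t ^ (-a - 1)) := by
  calc ENNReal.ofReal (D ^ (-a)) =
        ENNReal.ofReal (2 ^ (a + 1)) * ∫⁻ _ in Ioc D (2 * D), ENNReal.ofReal ((2 * D) ^ (-a - 1)) := by
        rw [setLIntegral_const, Real.volume_Ioc, ← ENNReal.ofReal_mul (by positivity),
          ← ENNReal.ofReal_mul (by positivity)]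
        congr 1
        have e1 : (2 * D) ^ (-a - 1) = ((2 : ℝ) ^ (a + 1))⁻¹ * (D ^ (-a) * D⁻¹) := by
          rw [Real.mul_rpow (by norm_num) hD.le, ← Real.rpow_neg (by norm_num),
            Real.rpow_sub_one hD.ne' (-a), div_eq_mul_inv]
          congr 2
          ring
        rw [e1]
        field_simp
        ring
    _ ≤ _ := by
        refine mul_le_mul_right ?_ _
        refine setLIntegral_mono' measurableSet_Ioc fun t ht => ENNReal.ofReal_le_ofReal ?_
        exact Real.rpow_le_rpow_of_nonpos (hD.trans ht.1) ht.2 (by linarith)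

lemma lintegral_Ioi_rpow_neg {D τ : ℝ} (hD : 0 < D) (hτ : 0 < τ) :
    ∫⁻ t in Ioi D, ENNReal.ofReal (t ^ (-τ - 1)) = ENNReal.ofReal (D ^ (-τ) / τ) := by
  rw [← ofReal_integral_eq_lintegral_ofReal (integrableOn_Ioi_rpow_of_lt (by linarith) hD)]
  · rw [integral_Ioi_rpow_of_lt (by linarith) hD]
    congr 1
    simp [neg_div_neg_eq]
  · filter_upwards [ae_restrict_mem measurableSet_Ioi] with t ht
    exact Real.rpow_nonneg (hD.trans ht).le _

/-- A weighted Hardy inequality for the regularised distance `infDist y F + δ`. -/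
lemma exists_hardy (n : ℕ) {p c : ℝ} (hp : 1 < p) (hc : 0 < c) :
    ∃ C : ℝ, 0 < C ∧ ∀ (F : Set (En n)) (δ N T τ : ℝ), 0 < δ → 0 < τ → τ ≤ 1 → F.Nonempty →
      (∀ z ∈ F, ‖z‖ ≤ N + T → ∀ t, 0 < t → t < T →
        c ≤ capP p (shiftedSet F z (3 * t)) (ball 0 1)) →
      ∀ W : En n → ℝ, LocallyLipschitz W → (∀ x ∈ F, W x = 0) → (∀ x, N < ‖x‖ → W x = 0) →
      (∀ x, W x ≠ 0 → 2 * (infDist x F + δ) < T) →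
      ∫⁻ y, ENNReal.ofReal (|W y| ^ p * (infDist y F + δ) ^ (-(p + τ))) ≤
        ENNReal.ofReal (C / τ) *
          ∫⁻ x, ENNReal.ofReal (gnorm W x ^ p * (infDist x F + δ) ^ (-τ)) := by
  obtain ⟨C, hC, hmaz⟩ := exists_neighborhood_mazya n hp hc
  refine ⟨2 ^ (p + 2) * C * 10, by positivity,
    fun F δ N T τ hδ hτ hτ1 hF hfat W hW hW0 hWN hWT => ?_⟩
  set D : En n → ℝ := fun y => infDist y F + δ with hDdef
  have hDm : Measurable D := ((continuous_infDist_pt F).add continuous_const).measurable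
  have hDpos : ∀ y, 0 < D y := fun y => add_pos_of_nonneg_of_pos infDist_nonneg hδ
  have hWc := hW.continuous
  have hfm : Measurable fun y => ENNReal.ofReal (|W y| ^ p) := by fun_prop
  have hgm := measurable_ofReal_gnorm_rpow W p
  have hp0 : p ≠ 0 := by linarith
  have hkm : ∀ a : ℝ, Measurable fun t : ℝ => ENNReal.ofReal (t ^ a) := fun a => by fun_prop
  set k₁ : ℝ → ℝ≥0∞ := (Ioo 0 T).indicator fun t => ENNReal.ofReal (t ^ (-(p + τ) - 1)) with hk₁
  set k₂ : ℝ → ℝ≥0∞ := (Ioi 0).indicator fun t => ENNReal.ofReal (t ^ (-τ - 1)) with hk₂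
  have hpt₁ : ∀ y, ENNReal.ofReal (|W y| ^ p * D y ^ (-(p + τ))) ≤
      ENNReal.ofReal (2 ^ (p + 2)) * (ENNReal.ofReal (|W y| ^ p) * ∫⁻ t in Ioi (D y), k₁ t) := by
    intro y
    by_cases hy : W y = 0
    · simp [hy, hp0]
    rw [ENNReal.ofReal_mul (by positivity), mul_left_comm]
    refine mul_le_mul_right ?_ _
    refine (ofReal_rpow_neg_le_lintegral (hDpos y) (by linarith)).trans ?_
    refine mul_le_mul' (ENNReal.ofReal_le_ofReal
      (Real.rpow_le_rpow_of_exponent_le (by norm_num) (by linarith))) ?_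
    calc _ ≤ ∫⁻ t in Ioc (D y) (2 * D y), k₁ t := by
          refine setLIntegral_mono' measurableSet_Ioc fun t ht => ?_
          have : t ∈ Ioo 0 T := ⟨(hDpos y).trans ht.1, ht.2.trans_lt (hWT y hy)⟩
          rw [hk₁, indicator_of_mem this]
      _ ≤ _ := lintegral_mono_set Ioc_subset_Ioi_self
  have hpt₂ : ∀ t, k₁ t * ∫⁻ y in {y | D y < t}, ENNReal.ofReal (|W y| ^ p) ≤
      ENNReal.ofReal C *
        (k₂ t * ∫⁻ y in {y | D y / 10 < t}, ENNReal.ofReal (gnorm W y ^ p)) := by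
    intro t
    by_cases ht : t ∈ Ioo 0 T
    swap
    · simp [hk₁, ht]
    by_cases htδ : t ≤ δ
    · have : {y | D y < t} = ∅ := by
        refine eq_empty_of_forall_notMem fun y hy => ?_
        have := infDist_nonneg (x := y) (s := F)
        simp only [mem_ofPred_eq, hDdef] at hy
        linarith
      simp [this]
    push Not at htδ
    have hm := hmaz F t N ht.1 hF (fun z hz hzN => hfat z hz (by linarith [ht.2]) t ht.1 ht.2)
      W hW hW0 hWN
    rw [hk₁, hk₂, indicator_of_mem ht, indicator_of_mem (mem_Ioi.2 ht.1)]
    calc _ ≤ ENNReal.ofReal (t ^ (-(p + τ) - 1)) * (ENNReal.ofReal (C * t ^ p) *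
          ∫⁻ x in {x | infDist x F < 9 * t}, ENNReal.ofReal (gnorm W x ^ p)) := by
          refine mul_le_mul_right (le_trans (lintegral_mono_set fun y hy => ?_) hm) _
          simp only [mem_ofPred_eq, hDdef] at hy ⊢
          linarith
      _ ≤ ENNReal.ofReal (t ^ (-(p + τ) - 1)) * (ENNReal.ofReal (C * t ^ p) *
          ∫⁻ y in {y | D y / 10 < t}, ENNReal.ofReal (gnorm W y ^ p)) := by
          refine mul_le_mul_right (mul_le_mul_right (lintegral_mono_set fun y hy => ?_) _) _
          simp only [mem_ofPred_eq, hDdef] at hy ⊢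
          linarith
      _ = _ := by
          have e : t ^ (-τ - 1) = t ^ (-(p + τ) - 1) * t ^ p := by
            rw [← Real.rpow_add ht.1]
            congr 1
            ring
          rw [e, ENNReal.ofReal_mul hC.le, ENNReal.ofReal_mul (Real.rpow_nonneg ht.1.le _)]
          ring
  have hpt₃ : ∀ y, ENNReal.ofReal (gnorm W y ^ p) * ∫⁻ t in Ioi (D y / 10), k₂ t ≤
      ENNReal.ofReal (10 / τ) * ENNReal.ofReal (gnorm W y ^ p * D y ^ (-τ)) := by
    intro y
    have hD10 : 0 < D y / 10 := div_pos (hDpos y) (by norm_num)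
    have e : ∫⁻ t in Ioi (D y / 10), k₂ t =
        ∫⁻ t in Ioi (D y / 10), ENNReal.ofReal (t ^ (-τ - 1)) := by
      refine setLIntegral_congr_fun measurableSet_Ioi fun t ht => ?_
      simp only [hk₂]
      rw [indicator_of_mem (mem_Ioi.2 (hD10.trans ht))]
    have hg := Real.rpow_nonneg (gnorm_nonneg W y) p
    rw [e, lintegral_Ioi_rpow_neg hD10 hτ, ← ENNReal.ofReal_mul hg,
      ← ENNReal.ofReal_mul (by positivity)]
    refine ENNReal.ofReal_le_ofReal ?_
    rw [Real.div_rpow (hDpos y).le (by norm_num), Real.rpow_neg (by norm_num : (0 : ℝ) ≤ 10),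
      div_inv_eq_mul]
    have h10 : (10 : ℝ) ^ τ ≤ 10 := by
      simpa using Real.rpow_le_rpow_of_exponent_le (by norm_num : (1 : ℝ) ≤ 10) hτ1
    have := Real.rpow_nonneg (hDpos y).le (-τ)
    calc gnorm W y ^ p * (D y ^ (-τ) * 10 ^ τ / τ) = gnorm W y ^ p * D y ^ (-τ) / τ * 10 ^ τ := by
          ring
      _ ≤ gnorm W y ^ p * D y ^ (-τ) / τ * 10 := by gcongr
      _ = _ := by ring
  calc _ ≤ ENNReal.ofReal (2 ^ (p + 2)) *
        ∫⁻ y, ENNReal.ofReal (|W y| ^ p) * ∫⁻ t in Ioi (D y), k₁ t := by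
        rw [← lintegral_const_mul' _ _ ENNReal.ofReal_ne_top]
        exact lintegral_mono hpt₁
    _ ≤ ENNReal.ofReal (2 ^ (p + 2)) * (ENNReal.ofReal C *
        ∫⁻ y, ENNReal.ofReal (gnorm W y ^ p) * ∫⁻ t in Ioi (D y / 10), k₂ t) := by
        refine mul_le_mul_right ?_ _
        rw [lintegral_mul_lintegral_Ioi hfm ((hkm _).indicator measurableSet_Ioo) hDm,
          lintegral_mul_lintegral_Ioi hgm ((hkm _).indicator measurableSet_Ioi)
            (hDm.div_const 10), ← lintegral_const_mul' _ _ ENNReal.ofReal_ne_top]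
        exact lintegral_mono hpt₂
    _ ≤ ENNReal.ofReal (2 ^ (p + 2)) * (ENNReal.ofReal C * (ENNReal.ofReal (10 / τ) *
        ∫⁻ y, ENNReal.ofReal (gnorm W y ^ p * D y ^ (-τ)))) := by
        refine mul_le_mul_right (mul_le_mul_right ?_ _) _
        rw [← lintegral_const_mul' _ _ ENNReal.ofReal_ne_top]
        exact lintegral_mono hpt₃
    _ = _ := by
        rw [mul_div_assoc, ENNReal.ofReal_mul (by positivity), ENNReal.ofReal_mul (by positivity)]
        ring

lemma LocallyLipschitz.rpow_const_of_pos {X : Type*} [PseudoMetricSpace X] {D : X → ℝ}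
    (hD : LocallyLipschitz D) (hpos : ∀ x, 0 < D x) (a : ℝ) :
    LocallyLipschitz fun x => D x ^ a := by
  intro x
  obtain ⟨K, t, ht, hK⟩ := (Real.contDiffAt_rpow_const_of_ne (p := a) (n := 1)
    (hpos x).ne').exists_lipschitzOnWith
  obtain ⟨L, s, hs, hL⟩ := hD x
  refine ⟨K * L, s ∩ D ⁻¹' t, Filter.inter_mem hs (hD.continuous.continuousAt ht), ?_⟩
  exact hK.comp (hL.mono inter_subset_left) fun y hy => hy.2

lemma lipschitzWith_infDist_add {X : Type*} [PseudoMetricSpace X] (F : Set X) (δ : ℝ) :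
    LipschitzWith 1 fun x => infDist x F + δ := by
  simpa using (lipschitz_infDist_pt F).add (LipschitzWith.const δ)

lemma gnorm_mul_rpow_rpow_le {n : ℕ} {V D : En n → ℝ} {x : En n} (hV : DifferentiableAt ℝ V x)
    (hD : DifferentiableAt ℝ D x) (hpos : 0 < D x) (hD1 : gnorm D x ≤ 1) {a p : ℝ} (ha : 0 ≤ a)
    (hp : 0 ≤ p) :
    gnorm (fun y => V y * D y ^ a) x ^ p ≤
      2 ^ p * (gnorm V x ^ p * D x ^ (a * p) + a ^ p * (|V x| ^ p * D x ^ (a * p - p))) := by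
  have hda := hD.hasFDerivAt.rpow_const (p := a) (Or.inl hpos.ne')
  have hDa : gnorm (fun y => D y ^ a) x ≤ a * D x ^ (a - 1) := by
    have h0 : 0 ≤ a * D x ^ (a - 1) := by positivity
    unfold gnorm at hD1 ⊢
    rw [hda.fderiv, norm_smul, Real.norm_eq_abs, abs_of_nonneg h0]
    exact mul_le_of_le_one_right h0 hD1
  have h1 : gnorm (fun y => V y * D y ^ a) x ≤
      gnorm V x * D x ^ a + |V x| * (a * D x ^ (a - 1)) := by
    refine (gnorm_mul_le hV hda.differentiableAt).trans ?_
    rw [abs_of_nonneg (Real.rpow_nonneg hpos.le a), add_comm, mul_comm (D x ^ a)]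
    gcongr
  have hg := gnorm_nonneg V x
  refine (Real.rpow_le_rpow (gnorm_nonneg _ _) h1 hp).trans
    ((add_rpow_le_two_rpow_mul (by positivity) (by positivity) hp).trans (le_of_eq ?_))
  rw [Real.mul_rpow hg (by positivity), Real.mul_rpow (abs_nonneg _) (by positivity),
    Real.mul_rpow ha (by positivity), ← Real.rpow_mul hpos.le, ← Real.rpow_mul hpos.le, sub_mul,
    one_mul]
  ring

/-- Absorption in the weighted Hardy inequality: the weight exponent `β * p` is small. -/
lemma exists_weighted_poincare (n : ℕ) {p c : ℝ} (hp : 1 < p) (hc : 0 < c) :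
    ∃ C : ℝ, 0 < C ∧ ∀ (F : Set (En n)) (δ N T β : ℝ), 0 < δ → 0 < β → β * p ≤ 1 →
      C * β ^ (p - 1) ≤ 1 → F.Nonempty →
      (∀ z ∈ F, ‖z‖ ≤ N + T → ∀ t, 0 < t → t < T →
        c ≤ capP p (shiftedSet F z (3 * t)) (ball 0 1)) →
      ∀ V : En n → ℝ, LocallyLipschitz V → (∀ x ∈ F, V x = 0) → (∀ x, N < ‖x‖ → V x = 0) →
      (∀ x, |V x| ≤ 1) → (∀ x, V x ≠ 0 → 2 * (infDist x F + δ) < T) →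
      ∫⁻ y, ENNReal.ofReal (|V y| ^ p * (infDist y F + δ) ^ (β * p - p)) ≤
        ENNReal.ofReal (C / β) *
          ∫⁻ x, ENNReal.ofReal (gnorm V x ^ p * (infDist x F + δ) ^ (β * p)) := by
  obtain ⟨C, hC, hhardy⟩ := exists_hardy n hp hc
  have hp0 : 0 < p := by linarith
  refine ⟨2 * (C * 4 ^ p / p), by positivity,
    fun F δ N T β hδ hβ hβp hβC hF hfat V hV hV0 hVN hV1 hVT => ?_⟩
  set D : En n → ℝ := fun y => infDist y F + δ with hDdef
  have hDL : LipschitzWith 1 D := lipschitzWith_infDist_add F δ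
  have hDpos : ∀ y, 0 < D y := fun y => add_pos_of_nonneg_of_pos infDist_nonneg hδ
  have hVc := hV.continuous
  have hDc := hDL.continuous
  set H := ∫⁻ y, ENNReal.ofReal (|V y| ^ p * D y ^ (β * p - p)) with hH
  set G := ∫⁻ x, ENNReal.ofReal (gnorm V x ^ p * D x ^ (β * p)) with hG
  have hHfin : H ≠ ⊤ := by
    have : H ≤ ∫⁻ _ in closedBall (0 : En n) N, ENNReal.ofReal (δ ^ (β * p - p)) := by
      rw [← lintegral_indicator measurableSet_closedBall]
      refine lintegral_mono fun y => ?_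
      by_cases hy : y ∈ closedBall (0 : En n) N
      · rw [indicator_of_mem hy]
        refine ENNReal.ofReal_le_ofReal ?_
        have h1 : |V y| ^ p ≤ 1 := Real.rpow_le_one (abs_nonneg _) (hV1 y) hp0.le
        have h2 : D y ^ (β * p - p) ≤ δ ^ (β * p - p) :=
          Real.rpow_le_rpow_of_nonpos hδ (le_add_of_nonneg_left infDist_nonneg) (by linarith)
        exact (mul_le_of_le_one_left (Real.rpow_nonneg (hDpos y).le _) h1).trans h2
      · rw [mem_closedBall_zero_iff, not_le] at hy
        simp [hVN y hy, hp0.ne']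
    refine ne_top_of_le_ne_top ?_ this
    rw [setLIntegral_const]
    exact ENNReal.mul_ne_top ENNReal.ofReal_ne_top measure_closedBall_lt_top.ne
  have hW := hhardy F δ N T (β * p) hδ (by positivity) hβp hF hfat
    (fun y => V y * D y ^ (2 * β)) (hV.mul_real (hDL.locallyLipschitz.rpow_const_of_pos hDpos _))
    (fun x hx => by simp [hV0 x hx]) (fun x hx => by simp [hVN x hx])
    fun x hx => hVT x (left_ne_zero_of_mul hx)
  have hl : ∀ y, |V y * D y ^ (2 * β)| ^ p * (infDist y F + δ) ^ (-(p + β * p)) =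
      |V y| ^ p * D y ^ (β * p - p) := fun y => by
    rw [abs_mul, abs_of_nonneg (Real.rpow_nonneg (hDpos y).le (2 * β)),
      Real.mul_rpow (abs_nonneg _) (Real.rpow_nonneg (hDpos y).le _), ← Real.rpow_mul (hDpos y).le,
      mul_assoc]
    change _ * (D y ^ _ * D y ^ _) = _
    rw [← Real.rpow_add (hDpos y)]
    congr 2
    ring
  have hr : ∫⁻ x, ENNReal.ofReal (gnorm (fun y => V y * D y ^ (2 * β)) x ^ p *
      (infDist x F + δ) ^ (-(β * p))) ≤
      ENNReal.ofReal (2 ^ p) * (G + ENNReal.ofReal ((2 * β) ^ p) * H) := by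
    rw [hG, hH, ← lintegral_const_mul' _ _ ENNReal.ofReal_ne_top,
      ← lintegral_add_right _ (by fun_prop), ← lintegral_const_mul' _ _ ENNReal.ofReal_ne_top]
    refine lintegral_mono_ae ?_
    filter_upwards [hV.ae_differentiableAt, hDL.locallyLipschitz.ae_differentiableAt] with x hx1 hx2
    have hgx := gnorm_nonneg V x
    have hDx := hDpos x
    rw [← ENNReal.ofReal_mul (by positivity), ← ENNReal.ofReal_add (by positivity) (by positivity),
      ← ENNReal.ofReal_mul (by positivity)]
    refine ENNReal.ofReal_le_ofReal ?_
    have h := gnorm_mul_rpow_rpow_le hx1 hx2 hDx (by simpa using gnorm_le_of_lipschitzWith hDL x)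
      (a := 2 * β) (by positivity) hp0.le
    refine (mul_le_mul_of_nonneg_right h (Real.rpow_nonneg hDx.le _)).trans (le_of_eq ?_)
    have e1 : D x ^ (β * p) = D x ^ (2 * β * p) * D x ^ (-(β * p)) := by
      rw [← Real.rpow_add hDx]
      congr 1
      ring
    have e2 : D x ^ (β * p - p) = D x ^ (2 * β * p - p) * D x ^ (-(β * p)) := by
      rw [← Real.rpow_add hDx]
      congr 1
      ring
    rw [e1, e2]
    ring
  simp_rw [hl] at hW
  have hmain : H ≤ ENNReal.ofReal (C / (β * p) * 2 ^ p) * G + ENNReal.ofReal (1 / 2) * H := by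
    refine hW.trans ((mul_le_mul_right hr _).trans ?_)
    rw [← mul_assoc, ← ENNReal.ofReal_mul (by positivity), mul_add, ← mul_assoc,
      ← ENNReal.ofReal_mul (by positivity)]
    gcongr
    have e : C / (β * p) * 2 ^ p * (2 * β) ^ p = C * 4 ^ p / p * β ^ (p - 1) := by
      rw [Real.mul_rpow (by norm_num) hβ.le, Real.rpow_sub_one hβ.ne',
        show (4 : ℝ) = 2 * 2 by norm_num, Real.mul_rpow (by norm_num) (by norm_num)]
      field_simp
    rw [e]
    linarith
  have hhalf : H = ENNReal.ofReal (1 / 2) * H + ENNReal.ofReal (1 / 2) * H := by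
    rw [← add_mul, ← ENNReal.ofReal_add (by norm_num) (by norm_num)]
    norm_num
  have h2 : ENNReal.ofReal (1 / 2) * H ≤ ENNReal.ofReal (C / (β * p) * 2 ^ p) * G := by
    refine (ENNReal.add_le_add_iff_right (a := ENNReal.ofReal (1 / 2) * H)
      (ENNReal.mul_ne_top ENNReal.ofReal_ne_top hHfin)).1 ?_
    exact hhalf.symm.le.trans hmain
  calc H = ENNReal.ofReal 2 * (ENNReal.ofReal (1 / 2) * H) := by
        rw [← mul_assoc, ← ENNReal.ofReal_mul (by norm_num)]
        norm_num
    _ ≤ ENNReal.ofReal 2 * (ENNReal.ofReal (C / (β * p) * 2 ^ p) * G) := mul_le_mul_right h2 _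
    _ ≤ _ := by
        rw [← mul_assoc, ← ENNReal.ofReal_mul (by norm_num)]
        gcongr
        have : (2 : ℝ) ^ p ≤ 4 ^ p := Real.rpow_le_rpow (by norm_num) (by norm_num) hp0.le
        calc 2 * (C / (β * p) * 2 ^ p) ≤ 2 * (C / (β * p) * 4 ^ p) := by gcongr
          _ = _ := by field_simp

lemma gnorm_eq_of_le_of_eq {n : ℕ} {u v : En n → ℝ} {x : En n} (hu : DifferentiableAt ℝ u x)
    (hv : DifferentiableAt ℝ v x) (hle : ∀ y, u y ≤ v y) (heq : u x = v x) :
    gnorm u x = gnorm v x := by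
  have hmin : IsLocalMin (fun y => v y - u y) x :=
    Filter.Eventually.of_forall fun y => by simpa [heq] using hle y
  have h := hmin.fderiv_eq_zero
  rw [fderiv_fun_sub hv hu, sub_eq_zero] at h
  rw [gnorm, gnorm, h]

lemma gnorm_eq_zero_of_eventually_const {n : ℕ} {u : En n → ℝ} {x : En n} {a : ℝ}
    (h : ∀ᶠ y in 𝓝 x, u y = a) : gnorm u x = 0 := by
  have : u =ᶠ[𝓝 x] fun _ => a := h
  rw [gnorm, this.fderiv_eq]
  simp

/-- A function vanishing on one ball, equal to one outside its double, with gradient bounded by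
the inverse radius. -/
lemma exists_annular_cutoff {n : ℕ} (a : En n) {ρ : ℝ} (hρ : 0 < ρ) :
    ∃ w : En n → ℝ, LocallyLipschitz w ∧ (∀ x, 0 ≤ w x) ∧ (∀ x, w x ≤ 1) ∧
      (∀ x ∈ closedBall a ρ, w x = 0) ∧ (∀ x ∉ closedBall a (2 * ρ), w x = 1) ∧
      (∀ x, gnorm w x ≤ ρ⁻¹) ∧ ∀ x ∉ closedBall a (2 * ρ), gnorm w x = 0 := by
  set w : En n → ℝ := fun x => max 0 (min 1 (dist x a / ρ - 1)) with hw
  have hL : LipschitzWith (Real.toNNReal ρ⁻¹) w := by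
    refine LipschitzWith.const_max (LipschitzWith.const_min ?_ 1) 0
    refine LipschitzWith.of_le_add_mul _ fun x y => ?_
    rw [Real.coe_toNNReal _ (by positivity)]
    have h := div_le_div_of_nonneg_right (dist_triangle x y a) hρ.le
    rw [add_div] at h
    rw [inv_mul_eq_div]
    linarith
  have h1 : ∀ x ∉ closedBall a (2 * ρ), w x = 1 := fun x hx => by
    rw [mem_closedBall, not_le, ← lt_div_iff₀ hρ] at hx
    rw [hw]
    simp only
    rw [min_eq_left (by linarith), max_eq_right zero_le_one]
  refine ⟨w, hL.locallyLipschitz, fun x => le_max_left _ _,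
    fun x => max_le zero_le_one (min_le_left _ _), fun x hx => ?_, h1, fun x => ?_, fun x hx => ?_⟩
  · rw [mem_closedBall, ← div_le_one hρ] at hx
    exact max_eq_left ((min_le_right _ _).trans (by linarith))
  · simpa [hρ.le] using gnorm_le_of_lipschitzWith hL x
  · exact gnorm_eq_zero_of_eventually_const (Filter.eventually_of_mem
      (isClosed_closedBall.isOpen_compl.mem_nhds hx) fun y hy => h1 y hy)

/-- A function vanishing on a finite union of balls, equal to one off the union of their
doubles, whose gradient is controlled by the individual inverse radii. -/
lemma exists_finite_annular_cutoff {n : ℕ} {ι : Type*} (T : Finset ι) (a : ι → En n) (ρ : ι → ℝ)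
    (hρ : ∀ i ∈ T, 0 < ρ i) {p : ℝ} (hp : 0 < p) :
    ∃ v : En n → ℝ, LocallyLipschitz v ∧ (∀ x, 0 ≤ v x) ∧ (∀ x, v x ≤ 1) ∧
      (∀ i ∈ T, ∀ x ∈ closedBall (a i) (ρ i), v x = 0) ∧
      (∀ x, (∀ i ∈ T, x ∉ closedBall (a i) (2 * ρ i)) → v x = 1) ∧
      ∀ᵐ x, gnorm v x ^ p ≤
        ∑ i ∈ T, (closedBall (a i) (2 * ρ i)).indicator (fun _ => ((ρ i)⁻¹) ^ p) x := by
  classical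
  induction T using Finset.induction_on with
  | empty =>
    refine ⟨fun _ => 1, LocallyLipschitz.const 1, by simp, by simp, by simp, by simp, ?_⟩
    refine Filter.Eventually.of_forall fun x => ?_
    rw [gnorm_eq_zero_of_eventually_const (a := 1) (by simp)]
    simp [hp.ne']
  | insert j T hj ih =>
    obtain ⟨v, hv, hv0, hv1, hvT, hvo, hvg⟩ := ih fun i hi => hρ i (Finset.mem_insert_of_mem hi)
    have hρj := hρ j (Finset.mem_insert_self j T)
    obtain ⟨w, hw, hw0, hw1, hwT, hwo, hwg, hwg0⟩ := exists_annular_cutoff (a j) hρj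
    refine ⟨fun x => min (w x) (v x), hw.min hv, fun x => le_min (hw0 x) (hv0 x),
      fun x => min_le_of_left_le (hw1 x), fun i hi x hx => ?_, fun x hx => ?_, ?_⟩
    · rcases Finset.mem_insert.1 hi with rfl | hi
      · simp [hwT x hx, hv0 x]
      · simp [hvT i hi x hx, hw0 x]
    · have h1 := hwo x (hx j (Finset.mem_insert_self j T))
      have h2 := hvo x fun i hi => hx i (Finset.mem_insert_of_mem hi)
      simp [h1, h2]
    · filter_upwards [hvg, hv.ae_differentiableAt, hw.ae_differentiableAt,
        (hw.min hv).ae_differentiableAt] with x hx hdv hdw hdm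
      rw [Finset.sum_insert hj]
      have hpos : ∀ i, 0 < ρ i → ∀ y,
          0 ≤ (closedBall (a i) (2 * ρ i)).indicator (fun _ => ((ρ i)⁻¹) ^ p) y :=
        fun i hi y => indicator_nonneg (fun _ _ => Real.rpow_nonneg (inv_nonneg.2 hi.le) _) y
      rcases le_total (w x) (v x) with h | h
      · rw [gnorm_eq_of_le_of_eq hdm hdw (fun y => min_le_left _ _) (min_eq_left h)]
        refine le_add_of_le_of_nonneg ?_ (Finset.sum_nonneg fun i hi =>
          hpos i (hρ i (Finset.mem_insert_of_mem hi)) x)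
        by_cases hxj : x ∈ closedBall (a j) (2 * ρ j)
        · rw [indicator_of_mem hxj]
          exact Real.rpow_le_rpow (gnorm_nonneg w x) (hwg x) hp.le
        · rw [hwg0 x hxj, Real.zero_rpow hp.ne']
          exact hpos j hρj x
      · rw [gnorm_eq_of_le_of_eq hdm hdv (fun y => min_le_right _ _) (min_eq_right h)]
        exact le_add_of_nonneg_of_le (hpos j hρj x) hx

lemma volume_closedBall_eq_ofReal {n : ℕ} (a : En n) {r : ℝ} (hr : 0 ≤ r) :
    volume (closedBall a r) =
      ENNReal.ofReal (r ^ n * (volume (ball (0 : En n) 1)).toReal) := by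
  rw [Measure.addHaar_closedBall volume a hr, finrank_euclideanSpace_fin,
    ENNReal.ofReal_mul (by positivity), ENNReal.ofReal_toReal measure_ball_lt_top.ne]

lemma toReal_volume_ball_pos (n : ℕ) : 0 < (volume (ball (0 : En n) 1)).toReal :=
  ENNReal.toReal_pos (measure_ball_pos _ _ one_pos).ne' measure_ball_lt_top.ne

lemma lintegral_ofReal_sum_indicator {n : ℕ} {ι : Type*} (T : Finset ι) (a : ι → En n)
    (r b : ι → ℝ) (hr : ∀ i ∈ T, 0 ≤ r i) (hb : ∀ i ∈ T, 0 ≤ b i) :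
    ∫⁻ x, ENNReal.ofReal (∑ i ∈ T, (closedBall (a i) (r i)).indicator (fun _ => b i) x) =
      ENNReal.ofReal (∑ i ∈ T, b i * r i ^ n * (volume (ball (0 : En n) 1)).toReal) := by
  have h : ∀ x, ENNReal.ofReal (∑ i ∈ T, (closedBall (a i) (r i)).indicator (fun _ => b i) x) =
      ∑ i ∈ T, (closedBall (a i) (r i)).indicator (fun _ => ENNReal.ofReal (b i)) x := fun x => by
    rw [ENNReal.ofReal_sum_of_nonneg fun i hi => indicator_nonneg (fun _ _ => hb i hi) x]
    refine Finset.sum_congr rfl fun i _ => ?_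
    by_cases hx : x ∈ closedBall (a i) (r i)
    · rw [indicator_of_mem hx, indicator_of_mem hx]
    · rw [indicator_of_notMem hx, indicator_of_notMem hx, ENNReal.ofReal_zero]
  simp_rw [h]
  rw [lintegral_finsetSum _ fun i _ => measurable_const.indicator measurableSet_closedBall,
    ENNReal.ofReal_sum_of_nonneg fun i hi => mul_nonneg (mul_nonneg (hb i hi)
      (pow_nonneg (hr i hi) n)) ENNReal.toReal_nonneg]
  refine Finset.sum_congr rfl fun i hi => ?_
  rw [lintegral_indicator measurableSet_closedBall, setLIntegral_const,
    volume_closedBall_eq_ofReal _ (hr i hi), ← ENNReal.ofReal_mul (hb i hi), mul_assoc]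

/-- The radial cutoff equal to one on `closedBall 0 8` and vanishing off `ball 0 9`. -/
lemma exists_radial_cutoff (n : ℕ) :
    ∃ ψ : En n → ℝ, LipschitzWith 1 ψ ∧ (∀ x, 0 ≤ ψ x) ∧ (∀ x, ψ x ≤ 1) ∧
      (∀ x, ‖x‖ ≤ 8 → ψ x = 1) ∧ (∀ x, 9 ≤ ‖x‖ → ψ x = 0) ∧
      ∀ x ∉ closedBall (0 : En n) 9, gnorm ψ x = 0 := by
  have h9 : ∀ x : En n, 9 ≤ ‖x‖ → max 0 (min 1 (9 - (1 : ℝ≥0) * ‖x‖)) = 0 := fun x hx => by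
    refine max_eq_left ((min_le_right _ _).trans ?_)
    rw [NNReal.coe_one, one_mul]
    linarith
  refine ⟨fun x => max 0 (min 1 (9 - (1 : ℝ≥0) * ‖x‖)), (lipschitzWith_cutoff 1 9 1).const_max 0,
    fun x => le_max_left _ _, fun x => max_le zero_le_one (min_le_left _ _), fun x hx => ?_, h9,
    fun x hx => ?_⟩
  · simp only
    rw [min_eq_left, max_eq_right zero_le_one]
    rw [NNReal.coe_one, one_mul]
    linarith
  · refine gnorm_eq_zero_of_eventually_const (Filter.eventually_of_mem
      (isClosed_closedBall.isOpen_compl.mem_nhds hx) fun y hy => h9 y ?_)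
    rw [mem_compl_iff, mem_closedBall_zero_iff, not_le] at hy
    exact hy.le

/-- A finite cover of a set at distance one from the origin yields a test function whose
weighted energy is controlled by the content of the cover. -/
lemma exists_cover_test_function {n : ℕ} {ι : Type*} {p τ : ℝ} (hp : 1 < p) (hτ : 0 ≤ τ)
    (hτ1 : τ ≤ 1) {F : Set (En n)} (hF1 : infDist 0 F = 1) (T : Finset ι) (a : ι → En n)
    (ρ : ι → ℝ) (haF : ∀ i ∈ T, a i ∈ F) (hρ : ∀ i ∈ T, 0 < ρ i)
    (hsmall : ∀ i ∈ T, 4 * ρ i ≤ ‖a i‖)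
    (hcov : F ∩ closedBall 0 9 ⊆ ⋃ i ∈ T, closedBall (a i) (ρ i)) {δ : ℝ} (hδ : 0 < δ)
    (hδ1 : δ ≤ 1) (hδρ : ∀ i ∈ T, δ ≤ ρ i) :
    ∃ V : En n → ℝ, LocallyLipschitz V ∧ (∀ x, |V x| ≤ 1) ∧ (∀ x ∈ F, V x = 0) ∧
      (∀ x, 9 ≤ ‖x‖ → V x = 0) ∧ (∀ x ∈ ball (0 : En n) (1 / 2), V x = 1) ∧
      (∫⁻ x in ball (0 : En n) 8, ENNReal.ofReal (gnorm V x ^ p * (infDist x F + δ) ^ τ) ≤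
        ENNReal.ofReal (2 ^ p * (volume (ball (0 : En n) 1)).toReal *
          (3 * 2 ^ n * ∑ i ∈ T, ρ i ^ (n - p + τ)))) ∧
      ∫⁻ x, ENNReal.ofReal (gnorm V x ^ p * (infDist x F + δ) ^ τ) ≤
        ENNReal.ofReal (2 ^ p * (volume (ball (0 : En n) 1)).toReal *
          (3 * 2 ^ n * ∑ i ∈ T, ρ i ^ (n - p + τ) + 11 * 9 ^ n)) := by
  have hp0 : 0 < p := by linarith
  obtain ⟨v, hv, hv0, hv1, hvT, hvo, hvg⟩ := exists_finite_annular_cutoff T a ρ hρ hp0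
  obtain ⟨ψ, hψL, hψ0, hψ1, hψ8, hψ9, hψg⟩ := exists_radial_cutoff n
  set D : En n → ℝ := fun y => infDist y F + δ with hDdef
  have hDpos : ∀ y, 0 < D y := fun y => add_pos_of_nonneg_of_pos infDist_nonneg hδ
  have hDa : ∀ i ∈ T, ∀ x ∈ closedBall (a i) (2 * ρ i), D x ≤ 3 * ρ i := fun i hi x hx => by
    have h1 := infDist_le_dist_of_mem (haF i hi) (x := x)
    have h2 := hδρ i hi
    rw [mem_closedBall] at hx
    simp only [hDdef]
    linarith
  have hD9 : ∀ x ∈ closedBall (0 : En n) 9, D x ≤ 11 := fun x hx => by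
    have h1 := infDist_le_infDist_add_dist (s := F) (x := x) (y := 0)
    rw [mem_closedBall] at hx
    simp only [hDdef]
    linarith
  have hpow : ∀ y b K : ℝ, 0 < y → 0 < b → 1 ≤ K → y ≤ K * b → y ^ τ ≤ K * b ^ τ :=
    fun y b K hy hb hK hyb => by
      refine (Real.rpow_le_rpow hy.le hyb hτ).trans ?_
      rw [Real.mul_rpow (by linarith) hb.le]
      gcongr
      simpa using Real.rpow_le_rpow_of_exponent_le hK hτ1
  set b : ι → ℝ := fun i => (ρ i)⁻¹ ^ p * (3 * ρ i ^ τ) with hb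
  have hb0 : ∀ i ∈ T, 0 ≤ b i := fun i hi => by
    have := hρ i hi
    positivity
  set B : En n → ℝ := fun x =>
    ∑ i ∈ T, (closedBall (a i) (2 * ρ i)).indicator (fun _ => b i) x with hB
  have hvB : ∀ᵐ x, gnorm v x ^ p * D x ^ τ ≤ B x := by
    filter_upwards [hvg] with x hx
    refine (mul_le_mul_of_nonneg_right hx (Real.rpow_nonneg (hDpos x).le τ)).trans ?_
    rw [Finset.sum_mul]
    refine Finset.sum_le_sum fun i hi => ?_
    by_cases hxi : x ∈ closedBall (a i) (2 * ρ i)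
    · rw [indicator_of_mem hxi, indicator_of_mem hxi]
      have := hρ i hi
      exact mul_le_mul_of_nonneg_left (hpow _ _ 3 (hDpos x) this (by norm_num)
        (hDa i hi x hxi)) (by positivity)
    · rw [indicator_of_notMem hxi, indicator_of_notMem hxi, zero_mul]
  have hBint : ∫⁻ x, ENNReal.ofReal (B x) = ENNReal.ofReal
      ((volume (ball (0 : En n) 1)).toReal * (3 * 2 ^ n * ∑ i ∈ T, ρ i ^ (n - p + τ))) := by
    rw [lintegral_ofReal_sum_indicator T a _ b (fun i hi => by linarith [hρ i hi]) hb0]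
    congr 1
    rw [Finset.mul_sum, Finset.mul_sum]
    refine Finset.sum_congr rfl fun i hi => ?_
    have := hρ i hi
    simp only [hb]
    rw [Real.rpow_add this, Real.rpow_sub this, Real.rpow_natCast, Real.inv_rpow this.le,
      mul_pow]
    ring
  have h2p : (1 : ℝ) ≤ 2 ^ p := Real.one_le_rpow (by norm_num) hp0.le
  set V : En n → ℝ := fun x => v x * ψ x with hV
  have hVl : LocallyLipschitz V := hv.mul_real hψL.locallyLipschitz
  refine ⟨V, hVl, fun x => ?_, fun x hx => ?_, fun x hx => by simp [hV, hψ9 x hx],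
    fun x hx => ?_, ?_, ?_⟩
  · rw [abs_of_nonneg (mul_nonneg (hv0 x) (hψ0 x))]
    exact mul_le_one₀ (hv1 x) (hψ0 x) (hψ1 x)
  · by_cases hx9 : x ∈ closedBall (0 : En n) 9
    · obtain ⟨i, hi, hxi⟩ := mem_iUnion₂.1 (hcov ⟨hx, hx9⟩)
      simp [hV, hvT i hi x hxi]
    · rw [mem_closedBall_zero_iff, not_le] at hx9
      simp [hV, hψ9 x hx9.le]
  · rw [mem_ball_zero_iff] at hx
    rw [hV]
    simp only
    rw [hψ8 x (by linarith), hvo x, one_mul]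
    intro i hi hxi
    have h1 := infDist_le_dist_of_mem (haF i hi) (x := (0 : En n))
    rw [hF1, dist_zero_left] at h1
    rw [mem_closedBall, dist_comm, dist_eq_norm] at hxi
    have h2 := norm_sub_norm_le (a i) x
    have h3 := hsmall i hi
    linarith
  · rw [mul_assoc, ENNReal.ofReal_mul (by positivity), ← hBint]
    calc ∫⁻ x in ball (0 : En n) 8, ENNReal.ofReal (gnorm V x ^ p * D x ^ τ) ≤
          ∫⁻ x in ball (0 : En n) 8, ENNReal.ofReal (B x) := by
          refine setLIntegral_mono_ae' measurableSet_ball ?_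
          filter_upwards [hvB] with x hx hx8
          have : V =ᶠ[𝓝 x] v := Filter.eventually_of_mem (isOpen_ball.mem_nhds hx8) fun y hy => by
            rw [mem_ball_zero_iff] at hy
            simp [hV, hψ8 y hy.le]
          rw [gnorm, this.fderiv_eq]
          exact ENNReal.ofReal_le_ofReal hx
      _ ≤ 1 * ∫⁻ x, ENNReal.ofReal (B x) := by
          rw [one_mul]
          exact setLIntegral_le_lintegral _ _
      _ ≤ _ := by
          gcongr
          rw [← ENNReal.ofReal_one]
          exact ENNReal.ofReal_le_ofReal h2p
  · have hpt : ∀ᵐ x, ENNReal.ofReal (gnorm V x ^ p * D x ^ τ) ≤ ENNReal.ofReal (2 ^ p) *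
        (ENNReal.ofReal (B x) +
          (closedBall (0 : En n) 9).indicator (fun _ => ENNReal.ofReal 11) x) := by
      filter_upwards [hvB, hv.ae_differentiableAt, hψL.locallyLipschitz.ae_differentiableAt]
        with x hx hdv hdψ
      have h1 : gnorm V x ≤ gnorm v x + gnorm ψ x := by
        refine (gnorm_mul_le hdv hdψ).trans ?_
        rw [abs_of_nonneg (hv0 x), abs_of_nonneg (hψ0 x), add_comm]
        exact add_le_add (mul_le_of_le_one_left (gnorm_nonneg _ _) (hψ1 x))
          (mul_le_of_le_one_left (gnorm_nonneg _ _) (hv1 x))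
      have h2 : gnorm V x ^ p ≤ 2 ^ p * (gnorm v x ^ p + gnorm ψ x ^ p) :=
        (Real.rpow_le_rpow (gnorm_nonneg _ _) h1 hp0.le).trans
          (add_rpow_le_two_rpow_mul (gnorm_nonneg _ _) (gnorm_nonneg _ _) hp0.le)
      have hDx := Real.rpow_nonneg (hDpos x).le τ
      have h3 : ENNReal.ofReal (gnorm ψ x ^ p * D x ^ τ) ≤
          (closedBall (0 : En n) 9).indicator (fun _ => ENNReal.ofReal 11) x := by
        by_cases hx9 : x ∈ closedBall (0 : En n) 9
        · rw [indicator_of_mem hx9]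
          refine ENNReal.ofReal_le_ofReal ?_
          have h4 : gnorm ψ x ^ p ≤ 1 := Real.rpow_le_one (gnorm_nonneg _ _)
            (by simpa using gnorm_le_of_lipschitzWith hψL x) hp0.le
          have h5 := hpow _ 1 11 (hDpos x) one_pos (by norm_num) (by simpa using hD9 x hx9)
          rw [Real.one_rpow, mul_one] at h5
          exact (mul_le_of_le_one_left hDx h4).trans h5
        · rw [indicator_of_notMem hx9, hψg x hx9, Real.zero_rpow hp0.ne']
          simp
      have hgv := Real.rpow_nonneg (gnorm_nonneg v x) p
      have hgψ := Real.rpow_nonneg (gnorm_nonneg ψ x) p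
      calc ENNReal.ofReal (gnorm V x ^ p * D x ^ τ) ≤
            ENNReal.ofReal (2 ^ p * (gnorm v x ^ p * D x ^ τ + gnorm ψ x ^ p * D x ^ τ)) := by
            refine ENNReal.ofReal_le_ofReal ?_
            rw [← add_mul, ← mul_assoc]
            exact mul_le_mul_of_nonneg_right h2 hDx
        _ = ENNReal.ofReal (2 ^ p) * (ENNReal.ofReal (gnorm v x ^ p * D x ^ τ) +
              ENNReal.ofReal (gnorm ψ x ^ p * D x ^ τ)) := by
            rw [ENNReal.ofReal_mul (by positivity),
              ENNReal.ofReal_add (by positivity) (by positivity)]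
        _ ≤ _ := by
            gcongr
    refine (lintegral_mono_ae hpt).trans (le_of_eq ?_)
    rw [lintegral_const_mul' _ _ ENNReal.ofReal_ne_top,
      lintegral_add_right _ (measurable_const.indicator measurableSet_closedBall), hBint,
      lintegral_indicator measurableSet_closedBall, setLIntegral_const,
      volume_closedBall_eq_ofReal _ (by norm_num), ← ENNReal.ofReal_mul (by norm_num),
      ← ENNReal.ofReal_add, ← ENNReal.ofReal_mul (by positivity)]
    · congr 1
      ring
    · have : 0 ≤ ∑ i ∈ T, ρ i ^ (n - p + τ) :=
        Finset.sum_nonneg fun i hi => Real.rpow_nonneg (hρ i hi).le _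
      positivity
    · positivity

lemma exists_pos_le_mul_rpow_le {a e M : ℝ} (ha : 0 < a) (he : 0 < e) :
    ∃ β : ℝ, 0 < β ∧ β ≤ e ∧ M * β ^ a ≤ 1 := by
  have h1 : Filter.Tendsto (fun β : ℝ => M * β ^ a) (𝓝[>] 0) (𝓝 0) := by
    have := ((Real.continuousAt_rpow_const 0 a (Or.inr ha.le)).const_mul M).tendsto
    simp only [Real.zero_rpow ha.ne', mul_zero] at this
    exact this.mono_left nhdsWithin_le_nhds
  have h2 : ∀ᶠ β : ℝ in 𝓝[>] 0, β ≤ e :=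
    (eventually_le_nhds he).filter_mono nhdsWithin_le_nhds
  obtain ⟨β, hβ1, hβ2, hβ3⟩ :=
    ((h1.eventually_le_const one_pos).and (h2.and self_mem_nhdsWithin)).exists
  exact ⟨β, hβ3, hβ2, hβ1⟩

lemma exists_pos_le_of_finset {ι : Type*} (T : Finset ι) (ρ : ι → ℝ) (hρ : ∀ i ∈ T, 0 < ρ i) :
    ∃ δ : ℝ, 0 < δ ∧ δ ≤ 1 ∧ ∀ i ∈ T, δ ≤ ρ i := by
  have h : ∀ᶠ δ : ℝ in 𝓝[>] 0, δ ≤ 1 ∧ ∀ i ∈ T, δ ≤ ρ i :=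
    ((eventually_le_nhds one_pos).and ((Filter.eventually_all_finset T).2 fun i hi =>
      eventually_le_nhds (hρ i hi))).filter_mono nhdsWithin_le_nhds
  obtain ⟨δ, h1, h2⟩ := (h.and self_mem_nhdsWithin).exists
  exact ⟨δ, h2, h1⟩

/-- Covers of a fat set at distance one from the origin, by balls that are small compared with
the distance of their centres to the origin, have content bounded below. -/
lemma exists_content_lower_bound (n : ℕ) {p c : ℝ} (hp : 1 < p) (hc : 0 < c) :
    ∃ β η : ℝ, 0 < β ∧ β * p ≤ 1 ∧ β * p ≤ p - 1 ∧ 0 < η ∧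
      ∀ {ι : Type} (F : Set (En n)), IsClosed F → infDist 0 F = 1 →
      (∀ z ∈ F, ‖z‖ ≤ 100 → ∀ r, 0 < r → r < 100 → c ≤ capP p (shiftedSet F z r) (ball 0 1)) →
      ∀ (T : Finset ι) (a : ι → En n) (ρ : ι → ℝ), (∀ i ∈ T, a i ∈ F) → (∀ i ∈ T, 0 < ρ i) →
      (∀ i ∈ T, 4 * ρ i ≤ ‖a i‖) →
      F ∩ closedBall 0 9 ⊆ ⋃ i ∈ T, closedBall (a i) (ρ i) →
      η ≤ ∑ i ∈ T, ρ i ^ (n - p + β * p) := by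
  obtain ⟨C₁, hC₁, hweight⟩ := exists_weighted_poincare n hp hc
  obtain ⟨C₂, hC₂, hmaz⟩ := exists_mazya n hp hc
  have hp0 : 0 < p := by linarith
  set ω := (volume (ball (0 : En n) 1)).toReal with hω
  have hω0 : 0 < ω := toReal_volume_ball_pos n
  set A := C₂ * 2 ^ p * 2 ^ p with hA
  set K := 2 ^ p * ω * (3 * 2 ^ n + 11 * 9 ^ n) with hK
  set c₀ := 1 / 2 * ((1 / 2) ^ n * ω) with hc₀
  have hA0 : 0 < A := by positivity
  have hK0 : 0 < K := by positivity
  have hc₀0 : 0 < c₀ := by positivity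
  obtain ⟨β, hβ, hβe, hβM⟩ := exists_pos_le_mul_rpow_le (a := p - 1) (e := min 1 (p - 1) / p)
    (M := C₁ * max 1 (2 * A * K / c₀)) (by linarith)
    (div_pos (lt_min one_pos (by linarith)) hp0)
  rw [le_div_iff₀ hp0] at hβe
  have hβp : β * p ≤ 1 := hβe.trans (min_le_left _ _)
  have hβ1 : 0 < β ^ (p - 1) := by positivity
  have hβC : C₁ * β ^ (p - 1) ≤ 1 := by
    refine le_trans ?_ hβM
    have := le_max_left 1 (2 * A * K / c₀)
    gcongr
    exact le_mul_of_one_le_right hC₁.le this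
  have hβA : A * K * (C₁ * β ^ (p - 1)) ≤ c₀ / 2 := by
    have h : 2 * A * K / c₀ * (C₁ * β ^ (p - 1)) ≤ 1 := by
      refine le_trans ?_ hβM
      rw [mul_comm C₁ (max _ _), mul_assoc (max _ _)]
      exact mul_le_mul_of_nonneg_right (le_max_right _ _)
        (mul_nonneg hC₁.le hβ1.le)
    rw [div_mul_eq_mul_div, div_le_one hc₀0] at h
    linarith
  refine ⟨β, c₀ / (4 * A * K), hβ, hβp, hβe.trans (min_le_right _ _), by positivity, ?_⟩
  intro ι F hFc hF1 hfat T a ρ haF hρ hsmall hcov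
  have hFne : F.Nonempty := by
    rw [nonempty_iff_ne_empty]
    rintro rfl
    simp at hF1
  obtain ⟨z, hzF, hz⟩ := hFc.exists_infDist_eq_dist hFne (0 : En n)
  rw [hF1, dist_zero_left] at hz
  obtain ⟨δ, hδ, hδ1, hδρ⟩ := exists_pos_le_of_finset T ρ hρ
  obtain ⟨V, hV, hV1, hVF, hV9, hVb, hloc, hglob⟩ := exists_cover_test_function hp
    (τ := β * p) (by positivity) hβp hF1 T a ρ haF hρ hsmall hcov hδ hδ1 hδρ
  set D : En n → ℝ := fun y => infDist y F + δ with hDdef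
  have hDL : LipschitzWith 1 D := lipschitzWith_infDist_add F δ
  have hDpos : ∀ y, 0 < D y := fun y => add_pos_of_nonneg_of_pos infDist_nonneg hδ
  have hDc := hDL.continuous
  have hVc := hV.continuous
  set S := ∑ i ∈ T, ρ i ^ (n - p + β * p) with hS
  have hS0 : 0 ≤ S := Finset.sum_nonneg fun i hi => Real.rpow_nonneg (hρ i hi).le _
  have hloc' : ∫⁻ x in ball (0 : En n) 8, ENNReal.ofReal (gnorm V x ^ p * D x ^ (β * p)) ≤
      ENNReal.ofReal (K * S) := by
    refine hloc.trans (ENNReal.ofReal_le_ofReal ?_)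
    rw [hK, mul_assoc (2 ^ p * ω)]
    gcongr
    exact le_add_of_nonneg_right (by positivity)
  have hglob' : ∫⁻ x, ENNReal.ofReal (gnorm V x ^ p * D x ^ (β * p)) ≤
      ENNReal.ofReal (K * (S + 1)) := by
    refine hglob.trans (ENNReal.ofReal_le_ofReal ?_)
    rw [hK, mul_assoc (2 ^ p * ω)]
    gcongr
    have h1 : (0 : ℝ) ≤ 3 * 2 ^ n := by positivity
    have h2 : (0 : ℝ) ≤ 11 * 9 ^ n := by positivity
    nlinarith [mul_nonneg h2 hS0]
  have hH : ∫⁻ y, ENNReal.ofReal (|V y| ^ p * D y ^ (β * p - p)) ≤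
      ENNReal.ofReal (C₁ / β * (K * (S + 1))) := by
    rw [ENNReal.ofReal_mul (by positivity)]
    refine (hweight F δ 9 23 β hδ hβ hβp hβC hFne (fun z hz hz9 t ht ht1 => hfat z hz
      (by linarith) _ (by linarith) (by linarith)) V hV hVF (fun x hx => hV9 x hx.le) hV1
      fun x hx => ?_).trans (mul_le_mul_right hglob' _)
    have h1 := infDist_le_infDist_add_dist (s := F) (x := x) (y := 0)
    rw [hF1, dist_zero_right] at h1
    have h2 : ‖x‖ < 9 := not_le.1 fun h => hx (hV9 x h)
    linarith
  have hW := hmaz F z 2 two_pos (hfat z hzF (by rw [← hz]; norm_num) 2 two_pos (by norm_num))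
    (fun x => V x * D x ^ β) (hV.mul_real (hDL.locallyLipschitz.rpow_const_of_pos hDpos β))
    fun x hx => by simp [hVF x hx]
  have hlow : ENNReal.ofReal c₀ ≤
      ∫⁻ y in ball z 2, ENNReal.ofReal (|V y * D y ^ β| ^ p) := by
    have hsub : ball (0 : En n) (1 / 2) ⊆ ball z 2 := by
      refine ball_subset_ball' ?_
      rw [dist_zero_left, ← hz]
      norm_num
    refine le_trans ?_ (lintegral_mono_set hsub)
    calc ENNReal.ofReal c₀ = ∫⁻ _ in ball (0 : En n) (1 / 2), ENNReal.ofReal (1 / 2) := by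
          rw [setLIntegral_const, Measure.addHaar_ball_of_pos volume _ (by norm_num),
            finrank_euclideanSpace_fin, hc₀, ENNReal.ofReal_mul (by norm_num),
            ENNReal.ofReal_mul (by positivity), hω,
            ENNReal.ofReal_toReal measure_ball_lt_top.ne]
      _ ≤ _ := by
          refine setLIntegral_mono' measurableSet_ball fun x hx => ENNReal.ofReal_le_ofReal ?_
          have hDx : 1 / 2 ≤ D x := by
            have h1 := infDist_le_infDist_add_dist (s := F) (x := 0) (y := x)
            rw [mem_ball, dist_comm] at hx
            simp only [hDdef]
            linarith
          rw [hVb x hx, one_mul, abs_of_nonneg (Real.rpow_nonneg (hDpos x).le β),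
            ← Real.rpow_mul (hDpos x).le]
          calc (1 / 2 : ℝ) = (1 / 2) ^ (1 : ℝ) := (Real.rpow_one _).symm
            _ ≤ (1 / 2) ^ (β * p) :=
              Real.rpow_le_rpow_of_exponent_ge (by norm_num) (by norm_num) hβp
            _ ≤ _ := Real.rpow_le_rpow (by norm_num) hDx (by positivity)
  have hup : ∫⁻ x in ball z (3 * 2), ENNReal.ofReal (gnorm (fun y => V y * D y ^ β) x ^ p) ≤
      ENNReal.ofReal (2 ^ p * (K * S + β ^ p * (C₁ / β * (K * (S + 1))))) := by
    have hsub : ball z (3 * 2) ⊆ ball (0 : En n) 8 := by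
      refine ball_subset_ball' ?_
      rw [dist_zero_right, ← hz]
      norm_num
    have hpt : ∀ᵐ x, ENNReal.ofReal (gnorm (fun y => V y * D y ^ β) x ^ p) ≤
        ENNReal.ofReal (2 ^ p) * (ENNReal.ofReal (gnorm V x ^ p * D x ^ (β * p)) +
          ENNReal.ofReal (β ^ p) * ENNReal.ofReal (|V x| ^ p * D x ^ (β * p - p))) := by
      filter_upwards [hV.ae_differentiableAt, hDL.locallyLipschitz.ae_differentiableAt]
        with x hx1 hx2
      have hgx := gnorm_nonneg V x
      have hDx := hDpos x
      rw [← ENNReal.ofReal_mul (by positivity),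
        ← ENNReal.ofReal_add (by positivity) (by positivity), ← ENNReal.ofReal_mul (by positivity)]
      exact ENNReal.ofReal_le_ofReal (gnorm_mul_rpow_rpow_le hx1 hx2 hDx
        (by simpa using gnorm_le_of_lipschitzWith hDL x) hβ.le hp0.le)
    refine (lintegral_mono_set hsub).trans ((lintegral_mono_ae (ae_restrict_of_ae hpt)).trans ?_)
    rw [lintegral_const_mul' _ _ ENNReal.ofReal_ne_top, lintegral_add_right _ (by fun_prop),
      lintegral_const_mul' _ _ ENNReal.ofReal_ne_top, ENNReal.ofReal_mul (by positivity),
      ENNReal.ofReal_add (by positivity) (by positivity), ENNReal.ofReal_mul (p := β ^ p)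
      (by positivity)]
    gcongr
    exact (setLIntegral_le_lintegral _ _).trans hH
  have hfin := hlow.trans (hW.trans (mul_le_mul_right hup _))
  rw [← ENNReal.ofReal_mul (by positivity), ENNReal.ofReal_le_ofReal_iff (by positivity)] at hfin
  have e : C₂ * 2 ^ p * (2 ^ p * (K * S + β ^ p * (C₁ / β * (K * (S + 1))))) =
      A * K * S + A * K * (C₁ * β ^ (p - 1)) * (S + 1) := by
    rw [hA, Real.rpow_sub_one hβ.ne']
    field_simp
  rw [e] at hfin
  have h1 : A * K * (C₁ * β ^ (p - 1)) * S ≤ A * K * S := by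
    refine mul_le_mul_of_nonneg_right ?_ hS0
    exact mul_le_of_le_one_right (by positivity) hβC
  rw [div_le_iff₀ (by positivity)]
  linarith

lemma lintegral_Ioc_rpow_sub_one {α : ℝ} (hα : 0 < α) :
    ∫⁻ t in Ioc (0 : ℝ) 1, ENNReal.ofReal (t ^ (α - 1)) = ENNReal.ofReal α⁻¹ := by
  have hlocInt := intervalIntegral.intervalIntegrable_rpow' (a := 0) (b := 1)
    (by linarith : -1 < α - 1)
  rw [intervalIntegrable_iff_integrableOn_Ioc_of_le zero_le_one] at hlocInt
  rw [← ofReal_integral_eq_lintegral_ofReal hlocInt]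
  · rw [← intervalIntegral.integral_of_le zero_le_one, integral_rpow (Or.inl (by linarith))]
    simp [hα.ne']
  · filter_upwards [ae_restrict_mem measurableSet_Ioc] with t ht
    exact Real.rpow_nonneg ht.1.le _

lemma le_add_rpow_mul_rpow {g κ q : ℝ} (hg : 0 ≤ g) (hκ : 0 < κ) (hq : 1 ≤ q) :
    g ≤ κ + κ ^ (1 - q) * g ^ q := by
  rcases le_total g κ with h | h
  · have := Real.rpow_nonneg hκ.le (1 - q)
    have := Real.rpow_nonneg hg q
    nlinarith [mul_nonneg ‹0 ≤ κ ^ (1 - q)› this]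
  · have hg0 := hκ.trans_le h
    have h1 : g ^ (1 - q) ≤ κ ^ (1 - q) := Real.rpow_le_rpow_of_nonpos hκ h (by linarith)
    have h2 : g = g ^ (1 - q) * g ^ q := by
      rw [← Real.rpow_add hg0]
      simp
    have h3 : g ^ (1 - q) * g ^ q ≤ κ ^ (1 - q) * g ^ q := by gcongr
    linarith

/-- A function which drops by one between `x` and distance two has, on some ball about `x`,
energy comparable to a power of the radius. -/
lemma exists_ball_energy_ge (n : ℕ) (hn : 0 < n) {q θ : ℝ} (hq : 1 < q) (hθ : 0 < θ) :
    ∃ c₁ : ℝ, 0 < c₁ ∧ ∀ (u : En n → ℝ) (x : En n), LocallyLipschitz u → 1 ≤ u x →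
      (∀ v, 2 < ‖v‖ → u (x + v) = 0) →
      ∃ r : ℝ, 0 < r ∧ r ≤ 4 ∧ ENNReal.ofReal (c₁ * r ^ (n - q + θ)) ≤
        ∫⁻ y in ball x r, ENNReal.ofReal (gnorm u y ^ q) := by
  have : Nonempty (Fin n) := ⟨⟨0, hn⟩⟩
  obtain ⟨v₀, hv₀⟩ := exists_norm_eq (En n) (by norm_num : (0 : ℝ) ≤ 3)
  set ω := (volume (ball (0 : En n) 1)).toReal with hω
  have hω0 : 0 < ω := toReal_volume_ball_pos n
  have hvol : volume (ball v₀ 1) = ENNReal.ofReal ω := by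
    rw [hω, ENNReal.ofReal_toReal measure_ball_lt_top.ne, Measure.addHaar_ball_center]
  have hq0 : 0 < q := by linarith
  set α := θ / q with hα
  have hα0 : 0 < α := by positivity
  set s : ℝ := n - q + θ with hs
  set lam := α / 16 with hlam
  have hlam0 : 0 < lam := by positivity
  set c₁ := α * ω / (16 * lam ^ (1 - q) * 4 ^ s) with hc₁
  have hc₁0 : 0 < c₁ := by positivity
  refine ⟨c₁, hc₁0, fun u x hu hux huv => ?_⟩
  by_contra! hcon
  have hA1 : ∀ v ∈ ball v₀ 1, 2 < ‖v‖ := fun v hv => by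
    rw [mem_ball, dist_comm, dist_eq_norm] at hv
    have := norm_sub_norm_le v₀ v
    linarith
  have hA2 : ball v₀ 1 ⊆ ball (0 : En n) 4 := ball_subset_ball' (by rw [dist_zero_right]; linarith)
  have hgm : Measurable fun z : En n × ℝ => ENNReal.ofReal (gnorm u (x + z.2 • z.1)) :=
    ((measurable_gnorm u).comp (by fun_prop)).ennreal_ofReal
  have hray : ∀ᵐ v ∂volume.restrict (ball v₀ 1), (1 : ℝ≥0∞) ≤
      ENNReal.ofReal 4 * ∫⁻ t in Ioc (0 : ℝ) 1, ENNReal.ofReal (gnorm u (x + t • v)) := by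
    filter_upwards [ae_restrict_mem measurableSet_ball,
      ae_restrict_of_ae (ae_ae_differentiableAt_ray hu x)] with v hv hd
    have h := enorm_sub_le_lintegral_gnorm hu x v hd
    rw [huv v (hA1 v hv), zero_sub, abs_neg] at h
    rw [← lintegral_const_mul' _ _ ENNReal.ofReal_ne_top, ← ENNReal.ofReal_one]
    refine (ENNReal.ofReal_le_ofReal (hux.trans (le_abs_self _))).trans (h.trans ?_)
    refine lintegral_mono fun t => ?_
    have hv4 := hA2 hv
    rw [mem_ball_zero_iff] at hv4
    rw [← ENNReal.ofReal_mul (by norm_num), mul_comm]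
    exact ENNReal.ofReal_le_ofReal (mul_le_mul_of_nonneg_right hv4.le (gnorm_nonneg _ _))
  have hinner : ∀ t ∈ Ioc (0 : ℝ) 1,
      ∫⁻ v in ball v₀ 1, ENNReal.ofReal (gnorm u (x + t • v)) ≤
        ENNReal.ofReal (lam * ω + lam ^ (1 - q) * c₁ * 4 ^ s) * ENNReal.ofReal (t ^ (α - 1)) := by
    intro t ht
    have ht0 := ht.1
    set κ := lam * t ^ (α - 1) with hκ
    have hκ0 : 0 < κ := by positivity
    calc ∫⁻ v in ball v₀ 1, ENNReal.ofReal (gnorm u (x + t • v)) ≤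
          ∫⁻ v in ball v₀ 1, (ENNReal.ofReal κ +
            ENNReal.ofReal (κ ^ (1 - q)) * ENNReal.ofReal (gnorm u (x + t • v) ^ q)) := by
          refine lintegral_mono fun v => ?_
          have hg := gnorm_nonneg u (x + t • v)
          rw [← ENNReal.ofReal_mul (by positivity), ← ENNReal.ofReal_add hκ0.le (by positivity)]
          exact ENNReal.ofReal_le_ofReal (le_add_rpow_mul_rpow hg hκ0 hq.le)
      _ = ENNReal.ofReal (κ * ω) + ENNReal.ofReal (κ ^ (1 - q)) *
            ∫⁻ v in ball v₀ 1, ENNReal.ofReal (gnorm u (x + t • v) ^ q) := by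
          rw [lintegral_add_left measurable_const, lintegral_const_mul' _ _ ENNReal.ofReal_ne_top,
            setLIntegral_const, hvol, ENNReal.ofReal_mul hκ0.le]
      _ ≤ ENNReal.ofReal (κ * ω) + ENNReal.ofReal (κ ^ (1 - q)) *
            (ENNReal.ofReal ((t ^ n)⁻¹) * ENNReal.ofReal (c₁ * (t * 4) ^ s)) := by
          refine add_le_add_right (mul_le_mul_right ((lintegral_mono_set hA2).trans ?_) _) _
          rw [setLIntegral_ball_comp_add_smul x ht0 4 fun y => ENNReal.ofReal (gnorm u y ^ q)]
          exact mul_le_mul_right (hcon (t * 4) (by linarith) (by linarith [ht.2])).le _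
      _ = _ := by
          rw [← ENNReal.ofReal_mul (by positivity), ← ENNReal.ofReal_mul (by positivity),
            ← ENNReal.ofReal_add (by positivity) (by positivity),
            ← ENNReal.ofReal_mul (by positivity)]
          congr 1
          have e : t ^ (α - 1) = (t ^ (α - 1)) ^ (1 - q) * (t ^ n)⁻¹ * t ^ s := by
            rw [← Real.rpow_natCast, ← Real.rpow_neg ht0.le, ← Real.rpow_mul ht0.le,
              ← Real.rpow_add ht0, ← Real.rpow_add ht0, hs, hα]
            congr 1
            field_simp
            ring
          rw [Real.mul_rpow ht0.le (by norm_num), hκ, Real.mul_rpow hlam0.le (by positivity)]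
          linear_combination (lam ^ (1 - q) * c₁ * 4 ^ s) * (-e)
  have hfin : ENNReal.ofReal ω ≤ ENNReal.ofReal
      (4 * ((lam * ω + lam ^ (1 - q) * c₁ * 4 ^ s) * α⁻¹)) := by
    calc ENNReal.ofReal ω = ∫⁻ _ in ball v₀ 1, 1 := by rw [setLIntegral_one, hvol]
      _ ≤ ∫⁻ v in ball v₀ 1, ENNReal.ofReal 4 *
            ∫⁻ t in Ioc (0 : ℝ) 1, ENNReal.ofReal (gnorm u (x + t • v)) := lintegral_mono_ae hray
      _ = ENNReal.ofReal 4 * ∫⁻ t in Ioc (0 : ℝ) 1,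
            ∫⁻ v in ball v₀ 1, ENNReal.ofReal (gnorm u (x + t • v)) := by
          rw [lintegral_const_mul' _ _ ENNReal.ofReal_ne_top,
            lintegral_lintegral_swap hgm.aemeasurable]
      _ ≤ ENNReal.ofReal 4 * ∫⁻ t in Ioc (0 : ℝ) 1,
            ENNReal.ofReal (lam * ω + lam ^ (1 - q) * c₁ * 4 ^ s) *
              ENNReal.ofReal (t ^ (α - 1)) :=
          mul_le_mul_right (setLIntegral_mono' measurableSet_Ioc hinner) _
      _ = _ := by
          rw [lintegral_const_mul' _ _ ENNReal.ofReal_ne_top, lintegral_Ioc_rpow_sub_one hα0,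
            ← ENNReal.ofReal_mul (by positivity), ← ENNReal.ofReal_mul (by norm_num)]
  rw [ENNReal.ofReal_le_ofReal_iff (by positivity)] at hfin
  have e1 : lam ^ (1 - q) * c₁ * 4 ^ s = α * ω / 16 := by
    have h1 : lam ^ (1 - q) ≠ 0 := by positivity
    have h2 : (4 : ℝ) ^ s ≠ 0 := by positivity
    rw [hc₁]
    field_simp
  rw [e1, hlam] at hfin
  have e2 : 4 * ((α / 16 * ω + α * ω / 16) * α⁻¹) = ω / 2 := by
    field_simp
    ring
  linarith

/-- A Vitali covering estimate: comparing two measures on balls of variable radius. -/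
lemma measure_le_of_forall_closedBall_le {X : Type*} [PseudoMetricSpace X] [MeasurableSpace X]
    [OpensMeasurableSpace X] [TopologicalSpace.SeparableSpace X] {μ ν : Measure X} {A : Set X}
    {R : X → ℝ} {R₀ : ℝ} {K : ℝ≥0∞} (hR : ∀ y ∈ A, 0 < R y) (hR₀ : ∀ y ∈ A, R y ≤ R₀)
    (h : ∀ y ∈ A, μ (closedBall y (5 * R y)) ≤ K * ν (closedBall y (R y))) :
    μ A ≤ K * ν univ := by
  obtain ⟨u, huA, hdisj, hcov⟩ := Vitali.exists_disjoint_subfamily_covering_enlargement_closedBall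
    A id R R₀ hR₀ 5 (by norm_num)
  simp only [id] at hdisj hcov
  have hcount : u.Countable := (hdisj.mono fun _ => ball_subset_closedBall).countable_of_isOpen
    (fun _ _ => isOpen_ball) fun y hy => nonempty_ball.2 (hR y (huA hy))
  have hsub : A ⊆ ⋃ y ∈ u, closedBall y (5 * R y) := fun y hy => by
    obtain ⟨b, hb, hyb⟩ := hcov y hy
    exact mem_iUnion₂.2 ⟨b, hb, hyb (mem_closedBall_self (hR y hy).le)⟩
  calc μ A ≤ μ (⋃ y ∈ u, closedBall y (5 * R y)) := measure_mono hsub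
    _ ≤ ∑' y : u, μ (closedBall (y : X) (5 * R y)) := measure_biUnion_le μ hcount _
    _ ≤ ∑' y : u, K * ν (closedBall (y : X) (R y)) := ENNReal.tsum_le_tsum fun y => h y (huA y.2)
    _ = K * ν (⋃ y ∈ u, closedBall y (R y)) := by
        rw [ENNReal.tsum_mul_left, measure_biUnion hcount hdisj fun _ _ => measurableSet_closedBall]
    _ ≤ K * ν univ := mul_le_mul_right (measure_mono (subset_univ _)) _

lemma shiftedSet_preimage {n : ℕ} (F : Set (En n)) (y : En n) (R : ℝ) (z : En n) (r : ℝ) :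
    shiftedSet {w | y + R • w ∈ F} z r = shiftedSet F (y + R • z) (R * r) := by
  ext w
  simp only [shiftedSet, mem_ofPred_eq, smul_add, smul_smul, add_assoc]

lemma infDist_preimage_eq_one {n : ℕ} {F : Set (En n)} (hF : IsClosed F) (hne : F.Nonempty)
    {y : En n} {R : ℝ} (hR : 0 < R) (hy : infDist y F = R) :
    infDist 0 {w : En n | y + R • w ∈ F} = 1 := by
  obtain ⟨z, hz, hyz⟩ := hF.exists_infDist_eq_dist hne y
  have hmem : R⁻¹ • (z - y) ∈ {w : En n | y + R • w ∈ F} := by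
    simp [smul_smul, hR.ne', hz]
  refine le_antisymm ?_ ((le_infDist ⟨_, hmem⟩).2 fun {w} hw => ?_)
  · refine (infDist_le_dist_of_mem hmem).trans (le_of_eq ?_)
    rw [dist_zero_left, norm_smul, norm_inv, Real.norm_eq_abs, abs_of_pos hR, ← dist_eq_norm,
      dist_comm, ← hyz, hy, inv_mul_cancel₀ hR.ne']
  · have hw' : y + R • w ∈ F := hw
    have h := infDist_le_dist_of_mem hw' (x := y)
    rw [hy, dist_self_add_right, norm_smul, Real.norm_eq_abs, abs_of_pos hR] at h
    rw [dist_zero_left]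
    exact (le_mul_iff_one_le_right hR).1 h

/-- Rescaled content lower bound around a hole of the cover. -/
lemma exists_content_lower_bound_hole (n : ℕ) {p c : ℝ} (hp : 1 < p) (hc : 0 < c) :
    ∃ β η : ℝ, 0 < β ∧ β * p ≤ 1 ∧ β * p ≤ p - 1 ∧ 0 < η ∧
      ∀ (F : Set (En n)), IsClosed F → (0 : En n) ∈ F →
      (∀ z ∈ F, ‖z‖ ≤ 2 → ∀ r, 0 < r → r < 1 → c ≤ capP p (shiftedSet F z r) (ball 0 1)) →
      ∀ (T : Finset (En n)) (ρ : En n → ℝ), (∀ x ∈ T, x ∈ F) → (∀ x ∈ T, 0 < ρ x) →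
      F ∩ closedBall 0 (1 / 2) ⊆ ⋃ x ∈ T, closedBall x (ρ x) →
      ∀ y ∈ ball (0 : En n) (1 / 100), (∀ x ∈ T, y ∉ closedBall x (4 * ρ x)) →
      0 < infDist y F ∧ η * infDist y F ^ (n - p + β * p) ≤
        ∑ x ∈ T with dist x y ≤ 12 * infDist y F, ρ x ^ (n - p + β * p) := by
  obtain ⟨β, η, hβ, hβ1, hβp, hη, hmain⟩ := exists_content_lower_bound n hp hc
  refine ⟨β, η, hβ, hβ1, hβp, hη, fun F hF h0F hfat T ρ hTF hρ hcov y hy hyT => ?_⟩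
  have hne : F.Nonempty := ⟨0, h0F⟩
  rw [mem_ball_zero_iff] at hy
  have hyF : y ∉ F := fun h => by
    obtain ⟨x, hx, hyx⟩ := mem_iUnion₂.1 (hcov ⟨h, by rw [mem_closedBall_zero_iff]; linarith⟩)
    exact hyT x hx (closedBall_subset_closedBall (by linarith [hρ x hx]) hyx)
  set R := infDist y F with hRdef
  have hR : 0 < R := (hF.notMem_iff_infDist_pos hne).1 hyF
  have hRy : R < 1 / 100 := by
    have := infDist_le_dist_of_mem h0F (x := y)
    rw [dist_zero_right] at this
    linarith
  refine ⟨hR, ?_⟩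
  set s : ℝ := n - p + β * p with hs
  have hnorm : ∀ w : En n, ‖y + R • w‖ ≤ ‖y‖ + R * ‖w‖ := fun w => by
    have := norm_add_le y (R • w)
    rwa [norm_smul, Real.norm_eq_abs, abs_of_pos hR] at this
  have hdist : ∀ x : En n, ‖R⁻¹ • (x - y)‖ = dist x y / R := fun x => by
    rw [norm_smul, norm_inv, Real.norm_eq_abs, abs_of_pos hR, dist_eq_norm, inv_mul_eq_div]
  have h := hmain {w | y + R • w ∈ F} (hF.preimage (by fun_prop))
    (infDist_preimage_eq_one hF hne hR rfl) (fun z hz hz100 r hr hr100 => ?_)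
    (T.filter fun x => dist x y ≤ 12 * R) (fun x => R⁻¹ • (x - y)) (fun x => ρ x / R)
    (fun x hx => ?_) (fun x hx => div_pos (hρ x (Finset.mem_filter.1 hx).1) hR)
    (fun x hx => ?_) fun w hw => ?_
  · have hsum : ∑ x ∈ T with dist x y ≤ 12 * R, (ρ x / R) ^ s =
        (∑ x ∈ T with dist x y ≤ 12 * R, ρ x ^ s) / R ^ s := by
      rw [Finset.sum_div]
      exact Finset.sum_congr rfl fun x hx =>
        Real.div_rpow (hρ x (Finset.mem_filter.1 hx).1).le hR.le s
    rw [hsum] at h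
    exact (le_div_iff₀ (by positivity)).1 h
  · rw [shiftedSet_preimage]
    refine hfat _ hz ((hnorm z).trans ?_) _ (by positivity) ?_
    · have : R * ‖z‖ ≤ 1 / 100 * 100 := by gcongr
      linarith
    · calc R * r < 1 / 100 * 100 := mul_lt_mul'' hRy hr100 hR.le hr.le
        _ = 1 := by norm_num
  · have := hTF x (Finset.mem_filter.1 hx).1
    simpa [smul_smul, hR.ne'] using this
  · have := hyT x (Finset.mem_filter.1 hx).1
    rw [mem_closedBall, not_le, dist_comm] at this
    rw [hdist, ← mul_div_assoc]
    gcongr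
  · obtain ⟨hwF, hw9⟩ := hw
    rw [mem_closedBall_zero_iff] at hw9
    have hR9 : R * ‖w‖ ≤ R * 9 := by gcongr
    obtain ⟨x, hx, hwx⟩ := mem_iUnion₂.1 (hcov ⟨hwF, by
      rw [mem_closedBall_zero_iff]
      linarith [hnorm w]⟩)
    have hx4 := hyT x hx
    rw [mem_closedBall, not_le] at hx4
    rw [mem_closedBall] at hwx
    have h1 := dist_triangle_left y x (y + R • w)
    have h2 : dist (y + R • w) y = R * ‖w‖ := by
      rw [dist_self_add_left, norm_smul, Real.norm_eq_abs, abs_of_pos hR]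
    have hxy : dist x y ≤ 12 * R := by
      rw [dist_comm]
      linarith
    refine mem_iUnion₂.2 ⟨x, Finset.mem_filter.2 ⟨hx, hxy⟩, ?_⟩
    have h3 : w - R⁻¹ • (x - y) = R⁻¹ • ((y + R • w) - x) := by
      rw [← sub_eq_zero]
      simp only [smul_sub, smul_add, smul_smul, inv_mul_cancel₀ hR.ne', one_smul]
      abel
    rw [mem_closedBall, dist_eq_norm, h3, norm_smul, norm_inv, Real.norm_eq_abs, abs_of_pos hR,
      ← dist_eq_norm, inv_mul_eq_div]
    gcongr

/-- Content lower bound for finite covers of a uniformly fat set near one of its points. -/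
lemma exists_content_lower_bound_cover (n : ℕ) {p c : ℝ} (hp : 1 < p) (hc : 0 < c) :
    ∃ β η : ℝ, 0 < β ∧ β * p ≤ p - 1 ∧ 0 < η ∧
      ∀ (F : Set (En n)), IsClosed F → (0 : En n) ∈ F →
      (∀ z ∈ F, ‖z‖ ≤ 2 → ∀ r, 0 < r → r < 1 → c ≤ capP p (shiftedSet F z r) (ball 0 1)) →
      ∀ (T : Finset (En n)) (ρ : En n → ℝ), (∀ x ∈ T, x ∈ F) → (∀ x ∈ T, 0 < ρ x) →
      (∀ x ∈ T, ρ x ≤ 20) →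
      F ∩ closedBall 0 (1 / 2) ⊆ ⋃ x ∈ T, closedBall x (ρ x) →
      η ≤ ∑ x ∈ T, ρ x ^ (n - p + β * p) := by
  obtain ⟨β, η, hβ, hβ1, hβp, hη, hmain⟩ := exists_content_lower_bound_hole n hp hc
  set ω := (volume (ball (0 : En n) 1)).toReal with hω
  have hω0 : 0 < ω := toReal_volume_ball_pos n
  set s : ℝ := n - p + β * p with hs
  have hsn : s ≤ n := by linarith
  set C : ℝ := 4 ^ n * 20 ^ (n - s) * ω + 60 ^ n * ω / η with hC
  have hC0 : 0 < C := by positivity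
  refine ⟨β, (1 / 100) ^ n * ω / C, hβ, hβp, by positivity,
    fun F hF h0F hfat T ρ hTF hρ hρ20 hcov => ?_⟩
  set M : ℝ := ∑ x ∈ T, ρ x ^ s with hM
  have hM0 : 0 ≤ M := Finset.sum_nonneg fun x hx => Real.rpow_nonneg (hρ x hx).le s
  set U : Set (En n) := ⋃ x ∈ T, closedBall x (4 * ρ x) with hU
  have hUM : volume U ≤ ENNReal.ofReal (4 ^ n * 20 ^ (n - s) * ω * M) := by
    calc volume U ≤ ∑ x ∈ T, volume (closedBall x (4 * ρ x)) := measure_biUnion_finset_le _ _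
      _ ≤ ∑ x ∈ T, ENNReal.ofReal (4 ^ n * 20 ^ (n - s) * ω * ρ x ^ s) := by
          refine Finset.sum_le_sum fun x hx => ?_
          have h0 := hρ x hx
          rw [volume_closedBall_eq_ofReal x (by positivity)]
          refine ENNReal.ofReal_le_ofReal ?_
          have h1 : ρ x ^ n = ρ x ^ (n - s) * ρ x ^ s := by
            rw [← Real.rpow_add h0, sub_add_cancel, Real.rpow_natCast]
          have h2 : ρ x ^ (n - s) ≤ 20 ^ (n - s) :=
            Real.rpow_le_rpow h0.le (hρ20 x hx) (by linarith)
          calc (4 * ρ x) ^ n * ω = 4 ^ n * ρ x ^ (n - s) * ω * ρ x ^ s := by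
                rw [mul_pow, h1]
                ring
            _ ≤ 4 ^ n * 20 ^ (n - s) * ω * ρ x ^ s := by gcongr
      _ = _ := by
          rw [← ENNReal.ofReal_sum_of_nonneg fun x hx => by
            have := hρ x hx
            positivity, ← Finset.mul_sum]
  set ν : Measure (En n) := ∑ x ∈ T, ENNReal.ofReal (ρ x ^ s) • Measure.dirac x with hν
  have hνuniv : ν univ = ENNReal.ofReal M := by
    simp only [hν, Measure.coe_finsetSum, Finset.sum_apply, Measure.smul_apply, measure_univ,
      smul_eq_mul, mul_one]
    rw [← ENNReal.ofReal_sum_of_nonneg fun x hx => Real.rpow_nonneg (hρ x hx).le s]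
  have hνball : ∀ y a, ν (closedBall y a) =
      ENNReal.ofReal (∑ x ∈ T with dist x y ≤ a, ρ x ^ s) := fun y a => by
    simp only [hν, Measure.coe_finsetSum, Finset.sum_apply, Measure.smul_apply, smul_eq_mul]
    rw [ENNReal.ofReal_sum_of_nonneg fun x hx =>
      Real.rpow_nonneg (hρ x (Finset.mem_filter.1 hx).1).le s, Finset.sum_filter]
    refine Finset.sum_congr rfl fun x _ => ?_
    rw [Measure.dirac_apply' _ measurableSet_closedBall]
    by_cases h : dist x y ≤ a <;> simp [h]
  have hA : volume (ball (0 : En n) (1 / 100) \ U) ≤ ENNReal.ofReal (60 ^ n * ω / η) * ν univ := by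
    have hpos : ∀ y ∈ ball (0 : En n) (1 / 100) \ U, 0 < infDist y F ∧
        η * infDist y F ^ s ≤ ∑ x ∈ T with dist x y ≤ 12 * infDist y F, ρ x ^ s := fun y hy =>
      hmain F hF h0F hfat T ρ hTF hρ hcov y hy.1 fun x hx h => hy.2 (mem_iUnion₂.2 ⟨x, hx, h⟩)
    have hle : ∀ y ∈ ball (0 : En n) (1 / 100) \ U, infDist y F ≤ 1 := fun y hy => by
      have h1 := infDist_le_dist_of_mem h0F (x := y)
      have h2 := mem_ball.1 hy.1
      linarith
    refine measure_le_of_forall_closedBall_le (R := fun y => 12 * infDist y F) (R₀ := 12)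
      (fun y hy => by linarith [(hpos y hy).1]) (fun y hy => by linarith [hle y hy]) fun y hy => ?_
    obtain ⟨h0, h1⟩ := hpos y hy
    rw [hνball, volume_closedBall_eq_ofReal y (by positivity),
      ← ENNReal.ofReal_mul (by positivity)]
    refine ENNReal.ofReal_le_ofReal ?_
    have h2 : infDist y F ^ n ≤ infDist y F ^ s := by
      rw [← Real.rpow_natCast]
      exact Real.rpow_le_rpow_of_exponent_ge h0 (hle y hy) hsn
    calc (5 * (12 * infDist y F)) ^ n * ω = 60 ^ n * infDist y F ^ n * ω := by
          rw [← mul_assoc, mul_pow]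
          norm_num
      _ ≤ 60 ^ n * infDist y F ^ s * ω := by gcongr
      _ = 60 ^ n * ω / η * (η * infDist y F ^ s) := by field_simp
      _ ≤ _ := by gcongr
  have hfin : ENNReal.ofReal ((1 / 100) ^ n * ω) ≤ ENNReal.ofReal (C * M) := by
    calc ENNReal.ofReal ((1 / 100) ^ n * ω) = volume (ball (0 : En n) (1 / 100)) := by
          rw [Measure.addHaar_ball_of_pos volume _ (by norm_num), finrank_euclideanSpace_fin,
            ENNReal.ofReal_mul (by positivity), hω, ENNReal.ofReal_toReal measure_ball_lt_top.ne]
      _ ≤ volume (U ∪ ball (0 : En n) (1 / 100) \ U) :=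
          measure_mono (by rw [union_sdiff_self]; exact subset_union_right)
      _ ≤ volume U + volume (ball (0 : En n) (1 / 100) \ U) := measure_union_le _ _
      _ ≤ ENNReal.ofReal (4 ^ n * 20 ^ (n - s) * ω * M) +
            ENNReal.ofReal (60 ^ n * ω / η) * ENNReal.ofReal M := by
          rw [hνuniv] at hA
          exact add_le_add hUM hA
      _ = ENNReal.ofReal (C * M) := by
          rw [← ENNReal.ofReal_mul (by positivity),
            ← ENNReal.ofReal_add (by positivity) (by positivity), hC, add_mul]
  rw [ENNReal.ofReal_le_ofReal_iff (by positivity)] at hfin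
  exact (div_le_iff₀' hC0).2 hfin

/-- A Lipschitz function on the closed unit ball vanishing on the sphere extends by zero. -/
lemma lipschitzWith_indicator_ball {n : ℕ} (hn : 0 < n) {u : En n → ℝ} {K : ℝ≥0}
    (hu : LipschitzOnWith K u (closedBall 0 1)) (h0 : ∀ x ∈ sphere (0 : En n) 1, u x = 0) :
    LipschitzWith K ((ball (0 : En n) 1).indicator u) := by
  have : Nonempty (Fin n) := ⟨⟨0, hn⟩⟩
  have hnear : ∀ x ∈ ball (0 : En n) 1, |u x| ≤ K * (1 - ‖x‖) := fun x hx => by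
    rw [mem_ball_zero_iff] at hx
    obtain ⟨z, hz, hxz⟩ : ∃ z : En n, ‖z‖ = 1 ∧ dist x z = 1 - ‖x‖ := by
      rcases eq_or_ne x 0 with rfl | hx0
      · obtain ⟨z, hz⟩ := exists_norm_eq (En n) zero_le_one
        exact ⟨z, hz, by simp [hz]⟩
      · have hpos := norm_pos_iff.2 hx0
        refine ⟨‖x‖⁻¹ • x, by rw [norm_smul, norm_inv, norm_norm, inv_mul_cancel₀ hpos.ne'], ?_⟩
        have e : ‖x‖⁻¹ • x - x = (‖x‖⁻¹ - 1) • x := by rw [sub_smul, one_smul]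
        rw [dist_comm, dist_eq_norm, e, norm_smul, Real.norm_eq_abs,
          abs_of_nonneg (sub_nonneg.2 (one_le_inv₀ hpos |>.2 hx.le)), sub_mul,
          inv_mul_cancel₀ hpos.ne', one_mul]
    have h := hu.dist_le_mul x (mem_closedBall_zero_iff.2 hx.le) z
      (mem_closedBall_zero_iff.2 hz.le)
    rwa [h0 z (mem_sphere_zero_iff_norm.2 hz), Real.dist_eq, sub_zero, hxz] at h
  have hmixed : ∀ x ∈ ball (0 : En n) 1, ∀ y ∉ ball (0 : En n) 1, |u x| ≤ K * dist x y :=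
    fun x hx y hy => by
      rw [mem_ball_zero_iff, not_lt] at hy
      refine (hnear x hx).trans (mul_le_mul_of_nonneg_left ?_ K.2)
      have := norm_sub_norm_le y x
      rw [dist_comm, dist_eq_norm]
      linarith
  refine LipschitzWith.of_dist_le_mul fun x y => ?_
  by_cases hx : x ∈ ball (0 : En n) 1 <;> by_cases hy : y ∈ ball (0 : En n) 1
  · rw [indicator_of_mem hx, indicator_of_mem hy]
    exact hu.dist_le_mul x (ball_subset_closedBall hx) y (ball_subset_closedBall hy)
  · rw [indicator_of_mem hx, indicator_of_notMem hy, Real.dist_eq, sub_zero]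
    exact hmixed x hx y hy
  · rw [indicator_of_notMem hx, indicator_of_mem hy, dist_comm x y, Real.dist_eq, zero_sub, abs_neg]
    exact hmixed y hy x hx
  · rw [indicator_of_notMem hx, indicator_of_notMem hy, dist_self]
    positivity

/-- Energy lower bound for functions that are at least one on a uniformly fat set. -/
lemma exists_energy_lower_bound {n : ℕ} (hn : 0 < n) {p c : ℝ} (hp : 1 < p) (hc : 0 < c) :
    ∃ ε κ : ℝ, 0 < ε ∧ ε < p - 1 ∧ 0 < κ ∧
      ∀ (F : Set (En n)), IsClosed F → (0 : En n) ∈ F →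
      (∀ z ∈ F, ‖z‖ ≤ 2 → ∀ r, 0 < r → r < 1 → c ≤ capP p (shiftedSet F z r) (ball 0 1)) →
      ∀ u : En n → ℝ, LocallyLipschitz u → (∀ x ∈ F, ‖x‖ ≤ 1 / 2 → 1 ≤ u x) →
      (∀ x, 1 < ‖x‖ → u x = 0) →
      ENNReal.ofReal κ ≤ ∫⁻ x, ENNReal.ofReal (gnorm u x ^ (p - ε)) := by
  obtain ⟨β, η, hβ, hβp, hη, hcover⟩ := exists_content_lower_bound_cover n hp hc
  have hε : 0 < β * p / 2 := by positivity
  obtain ⟨c₁, hc₁, hball⟩ := exists_ball_energy_ge n hn (q := p - β * p / 2) (θ := β * p / 2)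
    (by linarith) hε
  set s : ℝ := n - p + β * p with hs
  have hs' : n - (p - β * p / 2) + β * p / 2 = s := by rw [hs]; ring
  rw [hs'] at hball
  refine ⟨β * p / 2, c₁ * (η / 5 ^ s), hε, by linarith, by positivity,
    fun F hF h0F hfat u hu hu1 hu0 => ?_⟩
  have hex : ∀ x ∈ F ∩ closedBall 0 (1 / 2), ∃ r : ℝ, 0 < r ∧ r ≤ 4 ∧
      ENNReal.ofReal (c₁ * r ^ s) ≤
        ∫⁻ y in ball x r, ENNReal.ofReal (gnorm u y ^ (p - β * p / 2)) := fun x hx => by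
    have hx2 := mem_closedBall_zero_iff.1 hx.2
    refine hball u x hu (hu1 x hx.1 hx2) fun v hv => hu0 _ ?_
    have := norm_sub_le (x + v) x
    rw [add_sub_cancel_left] at this
    linarith
  choose! r hr hr4 hrE using hex
  have hK : IsCompact (F ∩ closedBall (0 : En n) (1 / 2)) :=
    (isCompact_closedBall _ _).inter_left hF
  obtain ⟨t, htK, htcov⟩ := hK.elim_nhds_subcover (fun x => ball x (r x))
    fun x hx => ball_mem_nhds x (hr x hx)
  obtain ⟨v, hvt, hdisj, hvcov⟩ := Vitali.exists_disjoint_subfamily_covering_enlargement_closedBall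
    (t : Set (En n)) id r 4 (fun x hx => hr4 x (htK x hx)) 5 (by norm_num)
  simp only [id] at hdisj hvcov
  lift v to Finset (En n) using t.finite_toSet.subset hvt with T
  have hTK : ∀ x ∈ T, x ∈ F ∩ closedBall (0 : En n) (1 / 2) := fun x hx => htK x (hvt hx)
  have hM := hcover F hF h0F hfat T (fun x => 5 * r x) (fun x hx => (hTK x hx).1)
    (fun x hx => by linarith [hr x (hTK x hx)]) (fun x hx => by linarith [hr4 x (hTK x hx)])
    fun x hx => by
      obtain ⟨a, ha, hxa⟩ := mem_iUnion₂.1 (htcov hx)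
      obtain ⟨b, hb, hab⟩ := hvcov a ha
      exact mem_iUnion₂.2 ⟨b, hb, hab (ball_subset_closedBall hxa)⟩
  have hsum : ∑ x ∈ T, (5 * r x) ^ s = 5 ^ s * ∑ x ∈ T, r x ^ s := by
    rw [Finset.mul_sum]
    exact Finset.sum_congr rfl fun x hx => Real.mul_rpow (by norm_num) (hr x (hTK x hx)).le
  rw [hsum] at hM
  calc ENNReal.ofReal (c₁ * (η / 5 ^ s)) ≤ ENNReal.ofReal (c₁ * ∑ x ∈ T, r x ^ s) := by
        refine ENNReal.ofReal_le_ofReal (mul_le_mul_of_nonneg_left ?_ hc₁.le)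
        exact (div_le_iff₀' (by positivity)).2 hM
    _ = ∑ x ∈ T, ENNReal.ofReal (c₁ * r x ^ s) := by
        rw [Finset.mul_sum, ENNReal.ofReal_sum_of_nonneg fun x hx => by
          have := hr x (hTK x hx)
          positivity]
    _ ≤ ∑ x ∈ T, ∫⁻ y in ball x (r x), ENNReal.ofReal (gnorm u y ^ (p - β * p / 2)) :=
        Finset.sum_le_sum fun x hx => hrE x (hTK x hx)
    _ = ∫⁻ y in ⋃ x ∈ T, ball x (r x), ENNReal.ofReal (gnorm u y ^ (p - β * p / 2)) :=
        (lintegral_biUnion_finset (fun x hx y hy hxy =>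
          (hdisj hx hy hxy).mono ball_subset_closedBall ball_subset_closedBall)
          (fun _ _ => measurableSet_ball) _).symm
    _ ≤ _ := setLIntegral_le_lintegral _ _

lemma nonempty_adm_shiftedSet {n : ℕ} (hn : 0 < n) (E : Set (En n)) (z : En n) (r : ℝ) :
    (Adm (shiftedSet E z r) (ball 0 1) 1).Nonempty := by
  have : Nonempty (Fin n) := ⟨⟨0, hn⟩⟩
  refine ⟨fun x => min 1 (2 - (2 : ℝ≥0) * ‖x‖), ⟨2, (lipschitzWith_cutoff 1 2 2).lipschitzOnWith⟩,
    fun x hx => ?_, fun x hx => ?_⟩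
  · have := mem_closedBall_zero_iff.1 hx.1
    refine le_min le_rfl ?_
    norm_num
    linarith
  · rw [frontier_ball _ one_ne_zero, mem_sphere_zero_iff_norm] at hx
    norm_num [hx]

/-- Capacity lower bound for a uniformly fat set with a smaller exponent. -/
lemma exists_le_capP_shiftedSet {n : ℕ} (hn : 0 < n) {p c : ℝ} (hp : 1 < p) (hc : 0 < c) :
    ∃ ε κ : ℝ, 0 < ε ∧ ε < p - 1 ∧ 0 < κ ∧
      ∀ (E : Set (En n)) (z : En n) (r : ℝ), IsClosed E → z ∈ E → 0 < r →
      (∀ w : En n, ‖w‖ ≤ 2 → z + r • w ∈ E → ∀ t, 0 < t → t < r →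
        c ≤ capP p (shiftedSet E (z + r • w) t) (ball 0 1)) →
      κ ≤ capP (p - ε) (shiftedSet E z r) (ball 0 1) := by
  obtain ⟨ε, κ, hε, hεp, hκ, hmain⟩ := exists_energy_lower_bound hn hp hc
  refine ⟨ε, κ, hε, hεp, hκ, fun E z r hE hz hr hfat => ?_⟩
  refine le_csInf ((nonempty_adm_shiftedSet hn E z r).image _) ?_
  rintro _ ⟨u, ⟨⟨K, hK⟩, hu1, hu0⟩, rfl⟩
  have : Nonempty (Fin n) := ⟨⟨0, hn⟩⟩
  rw [closure_ball _ one_ne_zero] at hK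
  rw [frontier_ball _ one_ne_zero] at hu0
  set v := (ball (0 : En n) 1).indicator u with hv
  have hvL : LipschitzWith K v := lipschitzWith_indicator_ball hn hK hu0
  have hball : ∀ x ∈ ball (0 : En n) 1, gnorm v x = gnorm u x := fun x hx => by
    have h : v =ᶠ[𝓝 x] u := Filter.eventually_of_mem (isOpen_ball.mem_nhds hx)
      fun y hy => indicator_of_mem hy u
    rw [gnorm, gnorm, h.fderiv_eq]
  have hout : ∀ x ∉ closedBall (0 : En n) 1, gnorm v x = 0 := fun x hx =>
    gnorm_eq_zero_of_eventually_const (Filter.eventually_of_mem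
      (isClosed_closedBall.isOpen_compl.mem_nhds hx) fun y hy =>
        indicator_of_notMem (fun h => hy (ball_subset_closedBall h)) u)
  have hq : 0 < p - ε := by linarith
  have hlower := hmain {w | z + r • w ∈ E} (hE.preimage (by fun_prop)) (by simpa using hz)
    (fun w hw hw2 t ht ht1 => by
      rw [shiftedSet_preimage]
      exact hfat w hw2 hw _ (by positivity) (mul_lt_of_lt_one_right hr ht1))
    v hvL.locallyLipschitz
    (fun x hx hx2 => by
      rw [hv, indicator_of_mem (mem_ball_zero_iff.2 (by linarith))]
      exact hu1 x ⟨mem_closedBall_zero_iff.2 hx2, hx⟩)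
    fun x hx => indicator_of_notMem (fun h => by
      rw [mem_ball_zero_iff] at h
      linarith) u
  have heq : ∫⁻ x, ENNReal.ofReal (gnorm v x ^ (p - ε)) =
      ∫⁻ x in ball (0 : En n) 1, ENNReal.ofReal (gnorm u x ^ (p - ε)) := by
    have h1 : ∫⁻ x, ENNReal.ofReal (gnorm v x ^ (p - ε)) =
        ∫⁻ x in closedBall (0 : En n) 1, ENNReal.ofReal (gnorm v x ^ (p - ε)) := by
      rw [← lintegral_indicator measurableSet_closedBall]
      refine lintegral_congr fun x => ?_
      by_cases hx : x ∈ closedBall (0 : En n) 1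
      · rw [indicator_of_mem hx]
      · rw [indicator_of_notMem hx, hout x hx, Real.zero_rpow hq.ne', ENNReal.ofReal_zero]
    rw [h1, ← Measure.restrict_congr_set (ae_eq_of_subset_of_measure_ge ball_subset_closedBall
      (Measure.addHaar_closedBall_eq_addHaar_ball volume 0 1).le
      measurableSet_ball.nullMeasurableSet measure_closedBall_lt_top.ne)]
    exact setLIntegral_congr_fun measurableSet_ball fun x hx => by simp only [hball x hx]
  rw [heq, ← ofReal_integral_eq_lintegral_ofReal ?_ ?_] at hlower
  · exact (ENNReal.ofReal_le_ofReal_iff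
      (integral_nonneg fun x => Real.rpow_nonneg (gnorm_nonneg u x) _)).1 hlower
  · refine Measure.integrableOn_of_bounded (M := K ^ (p - ε)) measure_ball_lt_top.ne
      ((measurable_gnorm u).pow_const _).aestronglyMeasurable ?_
    refine (ae_restrict_iff' measurableSet_ball).2 (Filter.Eventually.of_forall fun x hx => ?_)
    have h0 := gnorm_nonneg u x
    rw [Real.norm_eq_abs, abs_of_nonneg (by positivity)]
    refine Real.rpow_le_rpow h0 ?_ hq.le
    rw [← hball x hx]
    exact gnorm_le_of_lipschitzWith hvL x
  · exact Filter.Eventually.of_forall fun x => Real.rpow_nonneg (gnorm_nonneg u x) _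

/-- **Self-improvement of local uniform `p`-fatness** (Theorem 3.1): if a closed
set `E` is locally uniformly `p`-fat at `E ∩ B̄(x,r_a)` with parameters `c_fat`
and `r_0`, then there are `ε = ε(n,p,c_fat) ∈ (0,p-1)` and
`c̃_fat = c̃_fat(n,p,c_fat) > 0` such that `E` is locally uniformly
`(p-ε)`-fat at `E ∩ B̄(x, r̃_0)` with parameters `c̃_fat` and
`r̃_0 = (1/4) min{r_a, r_0}`. -/
theorem p_fatness_self_improving
    (n : ℕ) (hn : 0 < n) (p cfat : ℝ) (hp : 1 < p) (hcfat : 0 < cfat) :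
    ∃ ε ctil : ℝ, 0 < ε ∧ ε < p - 1 ∧ 0 < ctil ∧
      ∀ (E : Set (En n)), IsClosed E →
        ∀ x ∈ E, ∀ ra r0 : ℝ, 0 < ra → 0 < r0 →
          LocUnifPFatAt p E (E ∩ closedBall x ra) cfat r0 →
          LocUnifPFatAt (p - ε) E (E ∩ closedBall x (1 / 4 * min ra r0)) ctil
            (1 / 4 * min ra r0) := by
  obtain ⟨ε, κ, hε, hεp, hκ, hmain⟩ := exists_le_capP_shiftedSet hn hp hcfat
  refine ⟨ε, κ, hε, hεp, hκ, fun E hE x _ ra r0 hra hr0 hfat z hz r hr hrm => ?_⟩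
  have hma := min_le_left ra r0
  have hm0 := min_le_right ra r0
  refine hmain E z r hE hz.1 hr fun w hw hwE t ht htr =>
    hfat _ ⟨hwE, ?_⟩ t ht (by linarith)
  have hzx := mem_closedBall.1 hz.2
  have h1 : dist (z + r • w) z ≤ r * 2 := by
    rw [dist_self_add_left, norm_smul, Real.norm_eq_abs, abs_of_pos hr]
    gcongr
  rw [mem_closedBall]
  linarith [dist_triangle (z + r • w) z x]
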